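/- arXiv:1802.02993 — 11 statements merged into one kernel-verified Lean document; each statement's English description precedes it below -/
import Mathlib

section
/- Fix k ∈ {1,…,n+1}. For y ∈ ℝ^{n+1} let s = ∑_{j=1}^{n+1} y_j and let y' ∈ ℝ^{n+1} be defined by y'_j = y_j for j ≠ k and y'_k = π/2 − s. Then (i) cos(∑_{j=1}^{n+1} y'_j) · ∏_{j=1}^{n+1} sin y'_j = cos(s) · ∏_{j=1}^{n+1} sin y_j for all y ∈ ℝ^{n+1}; (ii) y ∈ Ω if and only if y' ∈ Ω; and hence (iii) F(y') = F(y) for all y ∈ Ω. -/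
open Real Finset

/-!
The slack `π / 2 - ∑ j, y j` plays the role of one further coordinate: `Ω` is the set where all
coordinates, slack included, are positive, and `cos (∑ j, y j)` is the sine of the slack, so
`cos (∑ j, y j) * ∏ j, sin (y j)` is the product of the sines of all of them. Both are symmetric,
and the substitution `y ↦ y'` merely exchanges the coordinate `y k` with the slack.
-/

section SlackSwap

variable {ι G : Type*} [Fintype ι] [DecidableEq ι] [AddCommGroup G]

/-- The substitution exchanging the coordinate `y k` with the slack `c - ∑ i, y i`; the point `y'`
of the paper is `slackSwap (π / 2) k y`. -/
def slackSwap (c : G) (k : ι) (y : ι → G) : ι → G :=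
  Function.update y k (c - ∑ i, y i)

theorem sum_slackSwap (c : G) (k : ι) (y : ι → G) : ∑ j, slackSwap c k y j = c - y k := by
  rw [slackSwap, sum_update_of_mem (mem_univ k), sum_eq_add_sum_sdiff_singleton_of_mem (mem_univ k)]
  abel

theorem slackSwap_involutive (c : G) (k : ι) : Function.Involutive (slackSwap c k) := by
  intro y
  rw [slackSwap, sum_slackSwap, sub_sub_cancel, slackSwap, Function.update_idem,
    Function.update_eq_self]

theorem map_slack_mul_prod_slackSwap {M : Type*} [CommMonoid M] (f : G → M) (c : G) (k : ι)
    (y : ι → G) :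
    f (c - ∑ j, slackSwap c k y j) * ∏ j, f (slackSwap c k y j) =
      f (c - ∑ j, y j) * ∏ j, f (y j) := by
  have prod_swap : ∏ j, f (slackSwap c k y j) = f (c - ∑ j, y j) * ∏ j ∈ univ \ {k}, f (y j) := by
    simp only [slackSwap, Function.apply_update (fun _ => f), prod_update_of_mem (mem_univ k)]
  rw [sum_slackSwap, sub_sub_cancel, prod_swap, mul_left_comm,
    ← prod_eq_mul_prod_sdiff_singleton_of_mem (mem_univ k) (fun j => f (y j))]

end SlackSwap

section OpenSimplex

/-- The open corner simplex cut off from the positive orthant by `∑ j, y j < c`; the domain `Ω` of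
the paper is `openSimplex (π / 2)`. -/
def openSimplex {ι M : Type*} [Fintype ι] [AddCommMonoid M] [Preorder M] (c : M) : Set (ι → M) :=
  {y | (∀ j, 0 < y j) ∧ ∑ j, y j < c}

variable {ι G : Type*} [Fintype ι] [DecidableEq ι]
  [AddCommGroup G] [PartialOrder G] [IsOrderedAddMonoid G]

theorem slackSwap_mem_openSimplex {c : G} {y : ι → G} (hy : y ∈ openSimplex c) (k : ι) :
    slackSwap c k y ∈ openSimplex c := by
  obtain ⟨coord_pos, sum_lt⟩ := hy
  refine ⟨?_, ?_⟩
  · exact (Function.forall_update_iff y fun _ x => 0 < x).2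
      ⟨sub_pos.2 sum_lt, fun j _ => coord_pos j⟩
  · rw [sum_slackSwap]
    exact sub_lt_self c (coord_pos k)

theorem slackSwap_mem_openSimplex_iff {c : G} {k : ι} {y : ι → G} :
    slackSwap c k y ∈ openSimplex c ↔ y ∈ openSimplex c :=
  ⟨fun h => slackSwap_involutive c k y ▸ slackSwap_mem_openSimplex h k,
    fun h => slackSwap_mem_openSimplex h k⟩

end OpenSimplex

theorem cos_sum_mul_prod_sin_slackSwap {ι : Type*} [Fintype ι] [DecidableEq ι] (k : ι)
    (y : ι → ℝ) :
    cos (∑ j, slackSwap (π / 2) k y j) * ∏ j, sin (slackSwap (π / 2) k y j) =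
      cos (∑ j, y j) * ∏ j, sin (y j) := by
  simpa only [sin_pi_div_two_sub] using map_slack_mul_prod_slackSwap sin (π / 2) k y

theorem stmt_3_general {ι α : Type*} [Fintype ι] [DecidableEq ι] (k : ι) (φ : ℝ → α)
    {F : (ι → ℝ) → α}
    (hF : ∀ y ∈ openSimplex (π / 2), F y = φ (cos (∑ j, y j) * ∏ j, sin (y j))) :
    (∀ y : ι → ℝ, cos (∑ j, slackSwap (π / 2) k y j) * ∏ j, sin (slackSwap (π / 2) k y j) =
      cos (∑ j, y j) * ∏ j, sin (y j)) ∧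
    (∀ y : ι → ℝ, y ∈ openSimplex (π / 2) ↔ slackSwap (π / 2) k y ∈ openSimplex (π / 2)) ∧
    (∀ y ∈ openSimplex (π / 2), F (slackSwap (π / 2) k y) = F y) := by
  refine ⟨cos_sum_mul_prod_sin_slackSwap k, fun _ => slackSwap_mem_openSimplex_iff.symm,
    fun y hy => ?_⟩
  rw [hF _ (slackSwap_mem_openSimplex hy k), hF y hy, cos_sum_mul_prod_sin_slackSwap]

theorem stmt_3 (n : ℕ) (hn : 1 ≤ n) (k : Fin (n+1))
    (Ω : Set (Fin (n+1) → ℝ))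
    (hΩ : Ω = {y | (∀ j, 0 < y j) ∧ ∑ j, y j < π/2})
    (F : (Fin (n+1) → ℝ) → ℝ)
    (hF : ∀ y, F y = (cos (∑ j, y j) * ∏ j, sin (y j)) ^ ((1:ℝ)/((n:ℝ)+1))) :
    (∀ y : Fin (n+1) → ℝ,
        cos (∑ j, Function.update y k (π/2 - ∑ i, y i) j) *
          ∏ j, sin (Function.update y k (π/2 - ∑ i, y i) j)
        = cos (∑ j, y j) * ∏ j, sin (y j)) ∧
    (∀ y : Fin (n+1) → ℝ, y ∈ Ω ↔ Function.update y k (π/2 - ∑ i, y i) ∈ Ω) ∧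
    (∀ y ∈ Ω, F (Function.update y k (π/2 - ∑ i, y i)) = F y) := by
  subst hΩ
  exact stmt_3_general k (· ^ ((1 : ℝ) / (n + 1))) fun y _ => hF y
end

section
/- Fix k ∈ {1,…,n+1}. Let R_k : ℝ^{n+1} → ℝ^{n+1} be the map sending y to the point y' with y'_j = y_j for j ≠ k and y'_k = π/2 − ∑_{i=1}^{n+1} y_i, and let R_k^* : ℝ^{n+1} → ℝ^{n+1} be the linear map with (R_k^* x)_i = x_i − x_k for i ≠ k and (R_k^* x)_k = −x_k. Then R_k maps Ω to Ω and, for every y ∈ Ω, the gradient of F satisfies ∇F(R_k(y)) = R_k^*(∇F(y)). -/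
open Real Finset

/-!
Adjoin to the coordinates of `y` the slack variable `c - ∑ i, y i`. In these barycentric coordinates
`R_k` is the transposition of `y k` with the slack, and since `cos (∑ i, y i)` is the sine of the
slack for `c = π / 2`, the function `F` is symmetric in all of them. Hence `F ∘ R_k = F`.
Since `R_k` is an affine involution, differentiating this identity at `R_k y` expresses the
derivative of `F` at `R_k y` through the derivative at `y` and the linear part of `R_k`, whose
transpose is `R_k^*`.
-/

section Swap

variable {ι M : Type*} [Fintype ι] [AddCommGroup M]

/-- The slack variable of the constraint `∑ i, y i ≤ c`: the barycentric coordinate that completes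
`y` to a family with sum `c`. -/
def slack (c : M) (y : ι → M) : M := c - ∑ i, y i

variable (ι) in
/-- The open corner simplex, cut out by positivity of all coordinates and of the slack; the region
`Ω` is the case `c = π / 2`. -/
def openCornerSimplex [LT M] (c : M) : Set (ι → M) :=
  {y | (∀ j, 0 < y j) ∧ ∑ j, y j < c}

variable [DecidableEq ι]

/-- The affine map exchanging the `k`-th coordinate with the slack; the map `R_k` is the case
`c = π / 2`. -/
def swapSlack (c : M) (k : ι) (y : ι → M) : ι → M := Function.update y k (slack c y)

/-- The map `R_k^*`, which is the transpose of the linear part of `swapSlack c k` and acts on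
gradients; it is defined over `M` so as to cover functions with values in a vector space. -/
def swapSlackDual (k : ι) (x : ι → M) (i : ι) : M := if i = k then -x k else x i - x k

theorem slack_swapSlack (c : M) (k : ι) (y : ι → M) : slack c (swapSlack c k y) = y k := by
  simp only [slack, swapSlack, sum_update_of_mem (mem_univ k),
    sum_eq_add_sum_sdiff_singleton_of_mem (mem_univ k) y]
  abel

theorem swapSlack_involutive (c : M) (k : ι) : Function.Involutive (swapSlack c k) := by
  intro y
  rw [swapSlack, slack_swapSlack, swapSlack, Function.update_idem, Function.update_eq_self]

theorem mul_prod_swapSlack {N : Type*} [CommMonoid N] (g : M → N) (c : M) (k : ι) (y : ι → M) :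
    g (slack c (swapSlack c k y)) * ∏ j, g (swapSlack c k y j) =
      g (slack c y) * ∏ j, g (y j) := by
  rw [slack_swapSlack]
  simp only [swapSlack, Function.apply_update (fun _ => g), prod_update_of_mem (mem_univ k),
    prod_eq_mul_prod_sdiff_singleton_of_mem (mem_univ k) fun j => g (y j)]
  exact mul_left_comm _ _ _

theorem mapsTo_swapSlack [PartialOrder M] [IsOrderedAddMonoid M] (c : M) (k : ι) :
    Set.MapsTo (swapSlack c k) (openCornerSimplex ι c) (openCornerSimplex ι c) := by
  rintro y ⟨hpos, hsum⟩
  have hpos_swap : ∀ j, 0 < swapSlack c k y j :=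
    (Function.forall_update_iff y fun _ a => 0 < a).2 ⟨sub_pos.2 hsum, fun j _ => hpos j⟩
  have hslack_swap : 0 < slack c (swapSlack c k y) := (hpos k).trans_eq (slack_swapSlack c k y).symm
  exact ⟨hpos_swap, sub_pos.1 hslack_swap⟩

end Swap

section Deriv

variable {ι 𝕜 E : Type*} [Fintype ι] [DecidableEq ι] [NontriviallyNormedField 𝕜]
  [NormedAddCommGroup E] [NormedSpace 𝕜 E]

/-- The linear part of the affine map `swapSlack c k`. -/
def swapSlackLinear (k : ι) : (ι → 𝕜) →L[𝕜] (ι → 𝕜) :=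
  .pi (Function.update .proj k (-∑ i, .proj i))

theorem swapSlackLinear_single (k j : ι) :
    swapSlackLinear k (Pi.single j (1 : 𝕜)) =
      if j = k then -Pi.single k 1 else Pi.single j 1 - Pi.single k 1 := by
  ext i
  rcases eq_or_ne i k with rfl | hi <;> split_ifs with hj <;>
    simp_all [swapSlackLinear, Pi.single_apply, eq_comm]

theorem apply_swapSlackLinear_single (L : (ι → 𝕜) →L[𝕜] E) (k j : ι) :
    L (swapSlackLinear k (Pi.single j 1)) = swapSlackDual k (fun i => L (Pi.single i 1)) j := by
  rw [swapSlackLinear_single, swapSlackDual, apply_ite L, map_neg, map_sub]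

theorem hasFDerivAt_swapSlack (c : 𝕜) (k : ι) (y : ι → 𝕜) :
    HasFDerivAt (swapSlack c k) (swapSlackLinear k) y := by
  refine hasFDerivAt_pi'.2 fun i => ?_
  rcases eq_or_ne i k with rfl | hi
  · simpa [swapSlack, slack, swapSlackLinear] using
      (HasFDerivAt.fun_sum fun j _ => hasFDerivAt_apply (𝕜 := 𝕜) j y).const_sub c
  · simpa [swapSlack, swapSlackLinear, hi] using hasFDerivAt_apply (𝕜 := 𝕜) i y

theorem hasFDerivAt_swapSlack_of_comp_eq {f : (ι → 𝕜) → E} {f' : (ι → 𝕜) →L[𝕜] E} {c : 𝕜} {k : ι}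
    {y : ι → 𝕜} (hf : HasFDerivAt f f' y) (hinv : f ∘ swapSlack c k = f) :
    HasFDerivAt f (f' ∘L swapSlackLinear k) (swapSlack c k y) := by
  rw [← swapSlack_involutive c k y] at hf
  simpa only [hinv] using hf.comp (swapSlack c k y) (hasFDerivAt_swapSlack c k _)

theorem fderiv_swapSlack_of_comp_eq {f : (ι → 𝕜) → E} {c : 𝕜} {k : ι} {y : ι → 𝕜}
    (hf : DifferentiableAt 𝕜 f y) (hinv : f ∘ swapSlack c k = f) :
    (fun j => fderiv 𝕜 f (swapSlack c k y) (Pi.single j 1)) =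
      swapSlackDual k fun j => fderiv 𝕜 f y (Pi.single j 1) := by
  ext j
  rw [(hasFDerivAt_swapSlack_of_comp_eq hf.hasFDerivAt hinv).fderiv]
  exact apply_swapSlackLinear_single _ k j

end Deriv

section SinProd

variable {ι : Type*} [Fintype ι]

/-- The `p`-th power of the product of the sines of all coordinates and of the slack; the function
`F` is the case `c = π / 2`, `p = 1 / (n + 1)`, where the sine of the slack is `cos (∑ j, y j)`. -/
noncomputable def sinProdRpow (c p : ℝ) (y : ι → ℝ) : ℝ :=
  (sin (slack c y) * ∏ j, sin (y j)) ^ p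

theorem sinProdRpow_comp_swapSlack [DecidableEq ι] (c p : ℝ) (k : ι) :
    sinProdRpow c p ∘ swapSlack c k = sinProdRpow c p :=
  funext fun y => congrArg (· ^ p) (mul_prod_swapSlack sin c k y)

theorem sin_slack_mul_prod_sin_pos {c : ℝ} (hc : c < π) {y : ι → ℝ}
    (hy : y ∈ openCornerSimplex ι c) : 0 < sin (slack c y) * ∏ j, sin (y j) := by
  obtain ⟨hpos, hsum⟩ := hy
  have hsum_nonneg : 0 ≤ ∑ j, y j := sum_nonneg fun j _ => (hpos j).le
  have hle_sum (j : ι) : y j ≤ ∑ i, y i := single_le_sum (fun i _ => (hpos i).le) (mem_univ j)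
  have hslack : 0 < sin (slack c y) :=
    sin_pos_of_pos_of_lt_pi (sub_pos.2 hsum) ((sub_le_self c hsum_nonneg).trans_lt hc)
  have hsin (j : ι) : 0 < sin (y j) :=
    sin_pos_of_pos_of_lt_pi (hpos j) ((hle_sum j).trans_lt (hsum.trans hc))
  exact mul_pos hslack (prod_pos fun j _ => hsin j)

theorem differentiableAt_sinProdRpow {c : ℝ} (hc : c < π) (p : ℝ) {y : ι → ℝ}
    (hy : y ∈ openCornerSimplex ι c) : DifferentiableAt ℝ (sinProdRpow c p) y := by
  refine DifferentiableAt.rpow_const ?_ (Or.inl (sin_slack_mul_prod_sin_pos hc hy).ne')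
  unfold slack
  fun_prop

theorem stmt_4_general [DecidableEq ι] (c p : ℝ) (k : ι) :
    Set.MapsTo (swapSlack c k) (openCornerSimplex ι c) (openCornerSimplex ι c) ∧
    ∀ y, DifferentiableAt ℝ (sinProdRpow c p) y →
      (fun j => fderiv ℝ (sinProdRpow c p) (swapSlack c k y) (Pi.single j 1)) =
        swapSlackDual k fun j => fderiv ℝ (sinProdRpow c p) y (Pi.single j 1) :=
  ⟨mapsTo_swapSlack c k, fun _ hy =>
    fderiv_swapSlack_of_comp_eq hy (sinProdRpow_comp_swapSlack c p k)⟩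

end SinProd

theorem stmt_4 (n : ℕ) (hn : 1 ≤ n) (k : Fin (n+1))
    (Ω : Set (Fin (n+1) → ℝ))
    (hΩ : Ω = {y | (∀ j, 0 < y j) ∧ ∑ j, y j < π/2})
    (F : (Fin (n+1) → ℝ) → ℝ)
    (hF : ∀ y, F y = (cos (∑ j, y j) * ∏ j, sin (y j)) ^ ((1:ℝ)/((n:ℝ)+1)))
    (R : (Fin (n+1) → ℝ) → (Fin (n+1) → ℝ))
    (hR : ∀ y, R y = Function.update y k (π/2 - ∑ i, y i))
    (Rstar : (Fin (n+1) → ℝ) → (Fin (n+1) → ℝ))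
    (hRstar : ∀ x i, Rstar x i = if i = k then -x k else x i - x k) :
    Set.MapsTo R Ω Ω ∧
    ∀ y ∈ Ω, (fun j => fderiv ℝ F (R y) (Pi.single j 1)) =
      Rstar (fun j => fderiv ℝ F y (Pi.single j 1)) := by
  obtain rfl : Ω = openCornerSimplex (Fin (n + 1)) (π / 2) := hΩ
  obtain rfl : F = sinProdRpow (π / 2) (1 / (n + 1)) := by
    ext y
    rw [hF, sinProdRpow, slack, sin_pi_div_two_sub]
  obtain rfl : R = swapSlack (π / 2) k := funext hR
  obtain rfl : Rstar = swapSlackDual k := funext₂ hRstar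
  exact (stmt_4_general (π / 2) (1 / (n + 1)) k).imp_right fun hgrad y hy =>
    hgrad y (differentiableAt_sinProdRpow (half_lt_self pi_pos) _ hy)
end

section
/- For every y ∈ Ω, the product of the partial derivatives of F at y satisfies ∏_{j=1}^{n+1} ∂F/∂y_j(y) = ∏_{j=1}^{n+1} cos(2y_j + ∑_{k≠j} y_k) / ( (n+1)^{n+1} · (cos(∑_{k=1}^{n+1} y_k))^{n} ). -/
open Real Finset

/-! The function `G y = cos (∑ k, y k) * ∏ k, sin (y k)` has partial derivatives
`∂G/∂y_j = cos (y_j + ∑ k, y k) * ∏ k ≠ j, sin (y k)`, by the addition formula for `cos`. In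
`∏ j, ∂G/∂y_j` every factor `sin (y k)` occurs `n` times, and passing from `G` to its `(n+1)`-st
root divides that product by `(n+1) ^ (n+1) * G ^ n`, so all the sines cancel. -/

section ProductOfPartialDerivatives

theorem prod_prod_erase {ι M : Type*} [DecidableEq ι] [CommMonoid M] (s : Finset ι) (f : ι → M) :
    ∏ j ∈ s, ∏ k ∈ s.erase j, f k = (∏ k ∈ s, f k) ^ (#s - 1) := by
  have swap_indices (j k : ι) : j ∈ s ∧ k ∈ s.erase j ↔ j ∈ s.erase k ∧ k ∈ s := by
    grind
  rw [prod_comm' swap_indices, ← prod_pow]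
  exact prod_congr rfl fun k hk ↦ by rw [prod_const, card_erase_of_mem hk]

theorem one_div_mul_rpow_one_div_sub_one_pow {x : ℝ} (hx : 0 < x) (n : ℕ) :
    (1 / ((n : ℝ) + 1) * x ^ (1 / ((n : ℝ) + 1) - 1)) ^ (n + 1) =
      1 / (((n : ℝ) + 1) ^ (n + 1) * x ^ n) := by
  have hexp : (1 / ((n : ℝ) + 1) - 1) * ((n + 1 : ℕ) : ℝ) = -n := by
    push_cast
    field_simp
    ring
  rw [mul_pow, ← rpow_mul_natCast hx.le, hexp, rpow_neg hx.le, rpow_natCast, one_div_pow,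
    ← one_div, one_div_mul_one_div]

theorem prod_fderiv_rpow_one_div {ι E : Type*} [Fintype ι] [NormedAddCommGroup E]
    [NormedSpace ℝ E] {n : ℕ} (hι : Fintype.card ι = n + 1) {G : E → ℝ} {x : E}
    (hG : DifferentiableAt ℝ G x) (hpos : 0 < G x) (v : ι → E) :
    ∏ j, fderiv ℝ (fun z ↦ G z ^ (1 / ((n : ℝ) + 1))) x (v j) =
      (∏ j, fderiv ℝ G x (v j)) / (((n : ℝ) + 1) ^ (n + 1) * G x ^ n) := by
  have hroot := hG.hasFDerivAt.rpow_const (p := 1 / ((n : ℝ) + 1)) (Or.inl hpos.ne')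
  simp only [hroot.fderiv, smul_apply, smul_eq_mul, prod_mul_distrib, prod_const, card_univ, hι]
  rw [← mul_pow, one_div_mul_rpow_one_div_sub_one_pow hpos, one_div_mul_eq_div]

end ProductOfPartialDerivatives

section PartialDerivatives

variable {ι 𝕜 : Type*} [Fintype ι] [DecidableEq ι] [NontriviallyNormedField 𝕜]

theorem fderiv_comp_sum_single {E : Type*} [NormedAddCommGroup E] [NormedSpace 𝕜 E] {g : 𝕜 → E}
    {y : ι → 𝕜} (hg : DifferentiableAt 𝕜 g (∑ k, y k)) (j : ι) :
    fderiv 𝕜 (fun z : ι → 𝕜 ↦ g (∑ k, z k)) y (Pi.single j 1) = deriv g (∑ k, y k) := by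
  have hsum := HasFDerivAt.fun_sum (u := univ) fun k _ ↦ hasFDerivAt_apply (𝕜 := 𝕜) k y
  have hcomp : HasFDerivAt (fun z : ι → 𝕜 ↦ g (∑ k, z k)) _ y := hg.hasFDerivAt.comp y hsum
  rw [hcomp.fderiv]
  simp

theorem fderiv_prod_comp_apply_single {A : Type*} [NormedCommRing A] [NormedAlgebra 𝕜 A]
    {f : ι → 𝕜 → A} {y : ι → 𝕜} (hf : ∀ k, DifferentiableAt 𝕜 (f k) (y k)) (j : ι) :
    fderiv 𝕜 (fun z : ι → 𝕜 ↦ ∏ k, f k (z k)) y (Pi.single j 1) =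
      (∏ k ∈ univ.erase j, f k (y k)) * deriv (f j) (y j) := by
  have hfactor (k : ι) : HasFDerivAt (fun z : ι → 𝕜 ↦ f k (z k)) _ y :=
    (hf k).hasFDerivAt.comp y (hasFDerivAt_apply k y)
  have hprod := HasFDerivAt.finsetProd (u := univ) fun k _ ↦ hfactor k
  rw [hprod.fderiv, _root_.sum_apply, sum_eq_single_of_mem j (mem_univ j)]
  · simp
  · intro k _ hkj
    simp [hkj]

end PartialDerivatives

section CosSumMulProdSin

variable {ι : Type*} [Fintype ι]

theorem cos_sum_mul_prod_sin_pos {y : ι → ℝ} (hpos : ∀ j, 0 < y j) (hsum : ∑ j, y j < π / 2) :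
    0 < cos (∑ j, y j) * ∏ j, sin (y j) := by
  have hle (j : ι) : y j ≤ ∑ k, y k := single_le_sum (fun k _ ↦ (hpos k).le) (mem_univ j)
  have hnonneg : 0 ≤ ∑ k, y k := sum_nonneg fun k _ ↦ (hpos k).le
  have hcos : 0 < cos (∑ k, y k) := cos_pos_of_mem_Ioo ⟨by linarith [pi_pos], hsum⟩
  have hsin (j : ι) : 0 < sin (y j) :=
    sin_pos_of_pos_of_lt_pi (hpos j) (by linarith [hle j, pi_pos])
  exact mul_pos hcos (prod_pos fun j _ ↦ hsin j)

variable [DecidableEq ι]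

theorem fderiv_cos_sum_mul_prod_sin_single (y : ι → ℝ) (j : ι) :
    fderiv ℝ (fun z : ι → ℝ ↦ cos (∑ k, z k) * ∏ k, sin (z k)) y (Pi.single j 1) =
      cos (2 * y j + ∑ k ∈ univ.erase j, y k) * ∏ k ∈ univ.erase j, sin (y k) := by
  have hangle : 2 * y j + ∑ k ∈ univ.erase j, y k = y j + ∑ k, y k := by
    rw [← add_sum_erase _ _ (mem_univ j)]
    ring
  have hcos := fderiv_comp_sum_single (y := y) differentiableAt_cos j
  have hsin := fderiv_prod_comp_apply_single (y := y) (fun _ ↦ differentiableAt_sin) j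
  rw [fderiv_fun_mul (by fun_prop) (by fun_prop), add_apply, smul_apply, smul_apply, smul_eq_mul,
    smul_eq_mul, hcos, hsin, Real.deriv_cos, Real.deriv_sin, hangle, cos_add,
    ← mul_prod_erase _ _ (mem_univ j)]
  ring

theorem stmt_5_general {n : ℕ} (hι : Fintype.card ι = n + 1) {y : ι → ℝ}
    (hy : 0 < cos (∑ k, y k) * ∏ k, sin (y k)) :
    ∏ j, fderiv ℝ (fun z : ι → ℝ ↦ (cos (∑ k, z k) * ∏ k, sin (z k)) ^ (1 / ((n : ℝ) + 1))) y
        (Pi.single j 1) =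
      (∏ j, cos (2 * y j + ∑ k ∈ univ.erase j, y k)) /
        (((n : ℝ) + 1) ^ (n + 1) * cos (∑ k, y k) ^ n) := by
  have hsin : ∏ k, sin (y k) ≠ 0 := right_ne_zero_of_mul hy.ne'
  have hdiff : DifferentiableAt ℝ (fun z : ι → ℝ ↦ cos (∑ k, z k) * ∏ k, sin (z k)) y := by
    fun_prop
  rw [prod_fderiv_rpow_one_div hι hdiff hy fun j ↦ Pi.single j 1]
  simp only [fderiv_cos_sum_mul_prod_sin_single]
  rw [prod_mul_distrib, prod_prod_erase, card_univ, hι, Nat.add_sub_cancel, mul_pow, ← mul_assoc,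
    mul_div_mul_right _ _ (pow_ne_zero n hsin)]

end CosSumMulProdSin

theorem stmt_5 (n : ℕ) (hn : 1 ≤ n)
    (Ω : Set (Fin (n+1) → ℝ))
    (hΩ : Ω = {y | (∀ j, 0 < y j) ∧ ∑ j, y j < π/2})
    (F : (Fin (n+1) → ℝ) → ℝ)
    (hF : ∀ y, F y = (cos (∑ j, y j) * ∏ j, sin (y j)) ^ ((1:ℝ)/((n:ℝ)+1)))
    (y : Fin (n+1) → ℝ) (hy : y ∈ Ω) :
    ∏ j, fderiv ℝ F y (Pi.single j 1) =
      (∏ j, cos (2 * y j + ∑ k ∈ Finset.univ.erase j, y k)) /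
        (((n:ℝ)+1) ^ (n+1) * (cos (∑ k, y k)) ^ n) := by
  obtain rfl := funext hF
  subst hΩ
  exact stmt_5_general (Fintype.card_fin _) (cos_sum_mul_prod_sin_pos hy.1 hy.2)
end

section
/- Suppose y ∈ Ω satisfies 2y_j + ∑_{k≠j} y_k ≤ π/2 for every j = 1,…,n+1. Then ∂F/∂y_j(y) ≥ 0 for every j, and ∏_{j=1}^{n+1} ∂F/∂y_j(y) ≤ 1/(n+1)^{n+1}. -/
/-!
Write `S = ∑ k, y k` and `G = cos S * ∏ k, sin (y k)`, with `N` coordinates. By the addition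
formula for the cosine, `∂G/∂y_j = cos (S + y_j) * ∏_{k ≠ j} sin (y k)`. Hence the partial
derivatives of `G ^ (1 / N)` multiply to `N⁻ᴺ * ∏ j, cos (S + y_j) / cos S ^ (N - 1)`. The
hypothesis says that every `S + y_j` lies in `[S, π / 2]`, so each of the `N` cosines in the
numerator is between `0` and `cos S ≤ 1`.
-/

open Real Finset

section CosSinProd

variable {ι : Type*} [Fintype ι] {y : ι → ℝ}

/-- The product `cos (∑ y_j) * ∏ sin y_j` whose `N`-th root is the function `F` of the theorem,
for coordinates indexed by an arbitrary finite type with `N` elements. -/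
noncomputable def cosSinProd (y : ι → ℝ) : ℝ :=
  cos (∑ j, y j) * ∏ j, sin (y j)

theorem cosSinProd_pos (hpos : ∀ j, 0 < y j) (hsum : ∑ j, y j < π / 2) : 0 < cosSinProd y := by
  have hsum_nonneg : 0 ≤ ∑ j, y j := sum_nonneg fun j _ ↦ (hpos j).le
  have hle_sum (j : ι) : y j ≤ ∑ k, y k := single_le_sum (fun k _ ↦ (hpos k).le) (mem_univ j)
  refine mul_pos (cos_pos_of_mem_Ioo ⟨by linarith [pi_pos], hsum⟩) (prod_pos fun j _ ↦ ?_)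
  exact sin_pos_of_pos_of_lt_pi (hpos j) (by linarith [hle_sum j, pi_pos])

theorem prod_cos_add_le_cos_pow [Nonempty ι] {a : ℝ} (ha : 0 ≤ a) (hy : ∀ j, 0 ≤ y j)
    (hay : ∀ j, a + y j ≤ π / 2) :
    ∏ j, cos (a + y j) ≤ cos a ^ (Fintype.card ι - 1) := by
  have hcos_nonneg : 0 ≤ cos a := by
    obtain ⟨i⟩ := ‹Nonempty ι›
    exact cos_nonneg_of_mem_Icc ⟨by linarith [pi_pos], by linarith [hy i, hay i]⟩
  calc
    ∏ j, cos (a + y j) ≤ ∏ _j : ι, cos a := by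
      refine prod_le_prod (fun j _ ↦ ?_) fun j _ ↦ ?_
      · exact cos_nonneg_of_mem_Icc ⟨by linarith [hy j, pi_pos], hay j⟩
      · exact cos_le_cos_of_nonneg_of_le_pi ha (by linarith [hay j, pi_pos]) (by linarith [hy j])
    _ = cos a ^ Fintype.card ι := by rw [prod_const, card_univ]
    _ ≤ cos a ^ (Fintype.card ι - 1) :=
      pow_le_pow_of_le_one hcos_nonneg (cos_le_one a) (Nat.sub_le _ _)

variable [DecidableEq ι]

theorem hasFDerivAt_cosSinProd (y : ι → ℝ) :
    HasFDerivAt cosSinProd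
      (∑ j, (cos (∑ k, y k + y j) * ∏ k ∈ univ.erase j, sin (y k)) •
        ContinuousLinearMap.proj (R := ℝ) (φ := fun _ : ι ↦ ℝ) j) y := by
  have hcoord (i : ι) := hasFDerivAt_apply (𝕜 := ℝ) (F' := fun _ : ι ↦ ℝ) i y
  have hcos := (HasFDerivAt.fun_sum (u := univ) fun i _ ↦ hcoord i).cos
  have hprod := HasFDerivAt.finsetProd (u := univ) fun i _ ↦ (hcoord i).sin
  refine (hcos.fun_mul hprod).congr_fderiv ?_
  ext v
  simp only [add_apply, _root_.sum_apply, smul_apply,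
    ContinuousLinearMap.proj_apply, smul_eq_mul, mul_sum, ← sum_add_distrib]
  refine sum_congr rfl fun j _ ↦ ?_
  rw [← mul_prod_erase univ (fun i ↦ sin (y i)) (mem_univ j), cos_add]
  ring

theorem fderiv_cosSinProd_rpow_single (hy : cosSinProd y ≠ 0) (p : ℝ) (j : ι) :
    fderiv ℝ (fun z ↦ cosSinProd z ^ p) y (Pi.single j 1) =
      p * cosSinProd y ^ p * (cos (∑ k, y k + y j) / (cos (∑ k, y k) * sin (y j))) := by
  have hpartial : (∑ i, (cos (∑ k, y k + y i) * ∏ k ∈ univ.erase i, sin (y k)) •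
      ContinuousLinearMap.proj (R := ℝ) (φ := fun _ : ι ↦ ℝ) i) (Pi.single j 1) =
      cos (∑ k, y k + y j) * ∏ k ∈ univ.erase j, sin (y k) := by
    simp [Pi.single_apply]
  have hfactor : cosSinProd y =
      cos (∑ k, y k) * sin (y j) * ∏ k ∈ univ.erase j, sin (y k) := by
    rw [cosSinProd, ← mul_prod_erase univ (fun i ↦ sin (y i)) (mem_univ j), mul_assoc]
  have hrest : ∏ k ∈ univ.erase j, sin (y k) ≠ 0 := right_ne_zero_of_mul (hfactor ▸ hy)
  rw [((hasFDerivAt_cosSinProd y).rpow_const (Or.inl hy)).fderiv, smul_apply, hpartial,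
    smul_eq_mul, rpow_sub_one hy, ← mul_div_mul_right (cos (∑ k, y k + y j)) _ hrest, ← hfactor]
  ring

theorem fderiv_cosSinProd_rpow_single_nonneg {p : ℝ} (hp : 0 ≤ p) (hpos : ∀ j, 0 < y j)
    {j : ι} (hj : ∑ k, y k + y j ≤ π / 2) :
    0 ≤ fderiv ℝ (fun z ↦ cosSinProd z ^ p) y (Pi.single j 1) := by
  have hsum : ∑ k, y k < π / 2 := by linarith [hpos j]
  have hprod_pos : 0 < cosSinProd y := cosSinProd_pos hpos hsum
  have hsum_nonneg : 0 ≤ ∑ k, y k := sum_nonneg fun k _ ↦ (hpos k).le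
  have hcos_add : 0 ≤ cos (∑ k, y k + y j) :=
    cos_nonneg_of_mem_Icc ⟨by linarith [hpos j, pi_pos], hj⟩
  have hcos : 0 ≤ cos (∑ k, y k) := cos_nonneg_of_mem_Icc ⟨by linarith [pi_pos], hsum.le⟩
  have hsin : 0 ≤ sin (y j) :=
    sin_nonneg_of_nonneg_of_le_pi (hpos j).le (by linarith [pi_pos])
  rw [fderiv_cosSinProd_rpow_single hprod_pos.ne']
  positivity

theorem prod_fderiv_cosSinProd_rpow_inv_card_single [Nonempty ι] (hy : 0 < cosSinProd y) :
    ∏ j, fderiv ℝ (fun z ↦ cosSinProd z ^ (Fintype.card ι : ℝ)⁻¹) y (Pi.single j 1) =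
      1 / (Fintype.card ι : ℝ) ^ Fintype.card ι *
        ((∏ j, cos (∑ k, y k + y j)) / cos (∑ k, y k) ^ (Fintype.card ι - 1)) := by
  have hroot : (cosSinProd y ^ (Fintype.card ι : ℝ)⁻¹) ^ Fintype.card ι = cosSinProd y :=
    rpow_inv_natCast_pow hy.le Fintype.card_ne_zero
  have hcos : cos (∑ k, y k) ≠ 0 := left_ne_zero_of_mul hy.ne'
  have hsin : ∏ k, sin (y k) ≠ 0 := right_ne_zero_of_mul hy.ne'
  simp_rw [fderiv_cosSinProd_rpow_single hy.ne', prod_mul_distrib, prod_div_distrib,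
    prod_mul_distrib, prod_const, card_univ, inv_pow]
  rw [hroot, cosSinProd, ← mul_pow_sub_one Fintype.card_ne_zero (cos (∑ k, y k))]
  field_simp

theorem stmt_6_general [Nonempty ι] (hpos : ∀ j, 0 < y j)
    (hW : ∀ j, 2 * y j + ∑ k ∈ univ.erase j, y k ≤ π / 2) :
    (∀ j, 0 ≤ fderiv ℝ (fun z ↦ cosSinProd z ^ (Fintype.card ι : ℝ)⁻¹) y (Pi.single j 1)) ∧
    ∏ j, fderiv ℝ (fun z ↦ cosSinProd z ^ (Fintype.card ι : ℝ)⁻¹) y (Pi.single j 1) ≤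
      1 / (Fintype.card ι : ℝ) ^ Fintype.card ι := by
  have hsum_add (j : ι) : ∑ k, y k + y j ≤ π / 2 := by
    linarith [hW j, add_sum_erase univ y (mem_univ j)]
  have hsum : ∑ j, y j < π / 2 := by
    obtain ⟨i⟩ := ‹Nonempty ι›
    linarith [hpos i, hsum_add i]
  have hsum_nonneg : 0 ≤ ∑ j, y j := sum_nonneg fun j _ ↦ (hpos j).le
  have hcos : 0 < cos (∑ j, y j) := cos_pos_of_mem_Ioo ⟨by linarith [pi_pos], hsum⟩
  refine ⟨fun j ↦ fderiv_cosSinProd_rpow_single_nonneg (by positivity) hpos (hsum_add j), ?_⟩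
  rw [prod_fderiv_cosSinProd_rpow_inv_card_single (cosSinProd_pos hpos hsum)]
  refine mul_le_of_le_one_right (by positivity) ((div_le_one (pow_pos hcos _)).2 ?_)
  exact prod_cos_add_le_cos_pow hsum_nonneg (fun j ↦ (hpos j).le) hsum_add

end CosSinProd

theorem stmt_6 (n : ℕ) (hn : 1 ≤ n)
    (Ω : Set (Fin (n+1) → ℝ))
    (hΩ : Ω = {y | (∀ j, 0 < y j) ∧ ∑ j, y j < π/2})
    (F : (Fin (n+1) → ℝ) → ℝ)
    (hF : ∀ y, F y = (cos (∑ j, y j) * ∏ j, sin (y j)) ^ ((1:ℝ)/((n:ℝ)+1)))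
    (y : Fin (n+1) → ℝ) (hy : y ∈ Ω)
    (hW : ∀ j, 2 * y j + ∑ k ∈ Finset.univ.erase j, y k ≤ π/2) :
    (∀ j, 0 ≤ fderiv ℝ F y (Pi.single j 1)) ∧
    ∏ j, fderiv ℝ F y (Pi.single j 1) ≤ 1 / ((n:ℝ)+1) ^ (n+1) := by
  obtain rfl : F = fun z ↦ cosSinProd z ^ ((n : ℝ) + 1)⁻¹ := by
    simpa only [cosSinProd, one_div] using funext hF
  simpa only [Fintype.card_fin, Nat.cast_add_one] using stmt_6_general (hΩ ▸ hy).1 hW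
end

section
/- Fix j ∈ {1,…,n+1} and let y* ∈ ℝ^{n+1} satisfy y*_j = 0, y*_k > 0 for all k ≠ j, and ∑_{k=1}^{n+1} y*_k < π/2 (so y* lies in the relative interior of the j-th facet of the closure of Ω). Then, as y → y* with y ∈ Ω, the partial derivative ∂F/∂y_j(y) tends to +∞, while for every k ≠ j the partial derivative ∂F/∂y_k(y) tends to 0. -/
open Real Finset Filter Topology

/-! Write `F = G ^ p` with `G y = cos (∑ i, y i) * ∏ i, sin (y i)`, so that
`∂ₖF = p * G ^ (p - 1) * ∂ₖG`. By the addition formula,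
`∂ₖG y = cos (∑ i, y i + y k) * ∏ i ≠ k, sin (y i)`. On the `j`-th facet `G` vanishes while `∂ⱼG` is
positive, so `∂ⱼF` blows up like `G ^ (p - 1)`. For `k ≠ j` neither `cos (∑ i, y i)` nor `sin (y k)`
vanishes on the facet, so `∂ₖG = O(G)` and `∂ₖF = O(G ^ p)` tends to `0`. -/

section RpowDerivative

variable {E : Type*} [NormedAddCommGroup E] [NormedSpace ℝ E] {f : E → ℝ} {p : ℝ} {l : Filter E}
  {v : E}

lemma fderiv_rpow_const_apply {x : E} (hf : DifferentiableAt ℝ f x) (hx : f x ≠ 0) :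
    fderiv ℝ (fun y => f y ^ p) x v = p * f x ^ (p - 1) * fderiv ℝ f x v := by
  rw [(hf.hasFDerivAt.rpow_const (Or.inl hx)).fderiv, smul_apply, smul_eq_mul]

lemma eventuallyEq_fderiv_rpow_const (hf : ∀ᶠ y in l, DifferentiableAt ℝ f y)
    (hpos : ∀ᶠ y in l, 0 < f y) :
    (fun y => fderiv ℝ (fun z => f z ^ p) y v) =ᶠ[l]
      fun y => p * f y ^ (p - 1) * fderiv ℝ f y v := by
  filter_upwards [hf, hpos] with y hfy hy using fderiv_rpow_const_apply hfy hy.ne'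

lemma tendsto_fderiv_rpow_const_atTop (hp₀ : 0 < p) (hp₁ : p < 1)
    (hf : ∀ᶠ y in l, DifferentiableAt ℝ f y) (hlim : Tendsto f l (𝓝[>] 0)) {c : ℝ} (hc : 0 < c)
    (hderiv : Tendsto (fun y => fderiv ℝ f y v) l (𝓝 c)) :
    Tendsto (fun y => fderiv ℝ (fun z => f z ^ p) y v) l atTop := by
  have hpow : Tendsto (fun y => f y ^ (p - 1)) l atTop :=
    (tendsto_rpow_neg_nhdsGT_zero (sub_neg.2 hp₁)).comp hlim
  exact ((hpow.const_mul_atTop hp₀).atTop_mul_pos hc hderiv).congr'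
    (eventuallyEq_fderiv_rpow_const hf (hlim.eventually self_mem_nhdsWithin)).symm

lemma tendsto_fderiv_rpow_const_nhds_zero (hp : 0 < p)
    (hf : ∀ᶠ y in l, DifferentiableAt ℝ f y) (hlim : Tendsto f l (𝓝[>] 0))
    (hderiv : (fun y => fderiv ℝ f y v) =O[l] f) :
    Tendsto (fun y => fderiv ℝ (fun z => f z ^ p) y v) l (𝓝 0) := by
  have hpos : ∀ᶠ y in l, 0 < f y := hlim.eventually self_mem_nhdsWithin
  have hpow : Tendsto (fun y => p * f y ^ p) l (𝓝 0) := by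
    simpa [zero_rpow hp.ne'] using
      ((tendsto_nhds_of_tendsto_nhdsWithin hlim).rpow_const (Or.inr hp.le)).const_mul p
  have hmul : (fun y => p * f y ^ (p - 1) * f y) =ᶠ[l] fun y => p * f y ^ p := by
    filter_upwards [hpos] with y hy
    rw [mul_assoc, ← rpow_add_one hy.ne', sub_add_cancel]
  have hbound : (fun y => fderiv ℝ (fun z => f z ^ p) y v) =O[l] fun y => p * f y ^ p :=
    (((Asymptotics.isBigO_refl _ l).mul hderiv).trans_eventuallyEq hmul).congr'
      (eventuallyEq_fderiv_rpow_const hf hpos).symm .rfl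
  exact hbound.trans_tendsto hpow

end RpowDerivative

lemma nonneg_of_eq_zero_of_pos_of_ne {ι α : Type*} [Zero α] [Preorder α] {y : ι → α} {j : ι}
    (hj : y j = 0) (hpos : ∀ k, k ≠ j → 0 < y k) (k : ι) : 0 ≤ y k := by
  rcases eq_or_ne k j with rfl | hk
  exacts [hj.ge, (hpos k hk).le]

section CosSumMulProdSin

variable {ι : Type*} [Fintype ι] {y : ι → ℝ}

/-- The trigonometric product `cos (∑ i, y i) * ∏ i, sin (y i)`, of which the function `F` of the
theorem is a root. -/
noncomputable def cosSumMulProdSin (y : ι → ℝ) : ℝ :=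
  cos (∑ i, y i) * ∏ i, sin (y i)

lemma differentiable_cosSumMulProdSin : Differentiable ℝ (cosSumMulProdSin (ι := ι)) := by
  unfold cosSumMulProdSin
  fun_prop

lemma cosSumMulProdSin_eq_zero {j : ι} (hj : y j = 0) : cosSumMulProdSin y = 0 := by
  rw [cosSumMulProdSin, prod_eq_zero (mem_univ j) (by rw [hj, sin_zero]), mul_zero]

lemma cos_sum_pos (hy : ∀ i, 0 ≤ y i) (hsum : ∑ i, y i < π / 2) : 0 < cos (∑ i, y i) :=
  cos_pos_of_mem_Ioo ⟨by linarith [pi_pos, sum_nonneg fun i (_ : i ∈ univ) => hy i], hsum⟩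

lemma sin_pos_of_sum_lt_pi (hy : ∀ i, 0 ≤ y i) (hsum : ∑ i, y i < π) {k : ι} (hk : 0 < y k) :
    0 < sin (y k) :=
  sin_pos_of_pos_of_lt_pi hk
    ((single_le_sum (fun i _ => hy i) (mem_univ k)).trans_lt hsum)

lemma cosSumMulProdSin_pos (hy : ∀ i, 0 < y i) (hsum : ∑ i, y i < π / 2) :
    0 < cosSumMulProdSin y :=
  mul_pos (cos_sum_pos (fun i => (hy i).le) hsum) <| prod_pos fun i _ =>
    sin_pos_of_sum_lt_pi (fun i => (hy i).le) (hsum.trans (half_lt_self pi_pos)) (hy i)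

lemma tendsto_cosSumMulProdSin_nhdsGT_zero {j : ι} (hj : y j = 0) :
    Tendsto cosSumMulProdSin (𝓝[{z | (∀ i, 0 < z i) ∧ ∑ i, z i < π / 2}] y) (𝓝[>] 0) := by
  refine tendsto_nhdsWithin_iff.2 ⟨?_, ?_⟩
  · rw [← cosSumMulProdSin_eq_zero hj]
    exact differentiable_cosSumMulProdSin.continuous.continuousAt.continuousWithinAt
  · filter_upwards [self_mem_nhdsWithin] with z hz using cosSumMulProdSin_pos hz.1 hz.2

variable [DecidableEq ι]

lemma fderiv_cosSumMulProdSin_single (y : ι → ℝ) (k : ι) :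
    fderiv ℝ cosSumMulProdSin y (Pi.single k 1) =
      cos (∑ i, y i + y k) * ∏ i ∈ univ.erase k, sin (y i) := by
  have hcoord (i : ι) : HasFDerivAt (fun z : ι → ℝ => z i)
      (.proj (R := ℝ) (φ := fun _ => ℝ) i) y := hasFDerivAt_apply i y
  have hsum := HasFDerivAt.fun_sum (u := univ) fun i _ => hcoord i
  have hprod := HasFDerivAt.finsetProd (u := univ) fun i _ => (hcoord i).sin
  have hderiv : fderiv ℝ cosSumMulProdSin y (Pi.single k 1) =
      cos (∑ i, y i) * ((∏ i ∈ univ.erase k, sin (y i)) * cos (y k)) -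
        sin (∑ i, y i) * ∏ i, sin (y i) := by
    have hG : HasFDerivAt cosSumMulProdSin _ y := hsum.cos.mul hprod
    rw [hG.fderiv]
    simp only [add_apply, smul_apply, _root_.sum_apply, ContinuousLinearMap.proj_apply,
      Pi.single_apply, smul_eq_mul, mul_ite, mul_one, mul_zero, sum_ite_eq', mem_univ, ↓reduceIte,
      mul_neg]
    ring
  rw [hderiv, ← mul_prod_erase univ (fun i => sin (y i)) (mem_univ k), cos_add]
  ring

lemma fderiv_cosSumMulProdSin_single_isBigO {k : ι} (hcos : cos (∑ i, y i) ≠ 0)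
    (hsin : sin (y k) ≠ 0) :
    (fun z => fderiv ℝ cosSumMulProdSin z (Pi.single k 1)) =O[𝓝 y] cosSumMulProdSin := by
  have hden : ContinuousAt (fun z : ι → ℝ => cos (∑ i, z i) * sin (z k)) y := by fun_prop
  have hden₀ : cos (∑ i, y i) * sin (y k) ≠ 0 := mul_ne_zero hcos hsin
  have hquot : ContinuousAt
      (fun z : ι → ℝ => cos (∑ i, z i + z k) / (cos (∑ i, z i) * sin (z k))) y :=
    ContinuousAt.div (by fun_prop) hden hden₀
  refine ((hquot.isBigO_one ℝ).mul (Asymptotics.isBigO_refl cosSumMulProdSin _)).congr' ?_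
    (.of_forall fun _ => one_mul _)
  filter_upwards [hden.eventually_ne hden₀] with z hz
  have hz_cos : cos (∑ i, z i) ≠ 0 := left_ne_zero_of_mul hz
  have hz_sin : sin (z k) ≠ 0 := right_ne_zero_of_mul hz
  rw [fderiv_cosSumMulProdSin_single, cosSumMulProdSin,
    ← mul_prod_erase univ (fun i => sin (z i)) (mem_univ k)]
  field_simp

lemma fderiv_cosSumMulProdSin_single_pos {j : ι} (hj : y j = 0) (hpos : ∀ k, k ≠ j → 0 < y k)
    (hsum : ∑ k, y k < π / 2) :
    0 < fderiv ℝ cosSumMulProdSin y (Pi.single j 1) := by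
  have hnonneg := nonneg_of_eq_zero_of_pos_of_ne hj hpos
  rw [fderiv_cosSumMulProdSin_single, hj, add_zero]
  exact mul_pos (cos_sum_pos hnonneg hsum) <| prod_pos fun i hi =>
    sin_pos_of_sum_lt_pi hnonneg (hsum.trans (half_lt_self pi_pos)) (hpos i (ne_of_mem_erase hi))

lemma continuous_fderiv_cosSumMulProdSin_single (k : ι) :
    Continuous fun z : ι → ℝ => fderiv ℝ cosSumMulProdSin z (Pi.single k 1) := by
  simp only [fderiv_cosSumMulProdSin_single]
  fun_prop

theorem stmt_7_general {p : ℝ} (hp₀ : 0 < p) (hp₁ : p < 1) {j : ι} (hj : y j = 0)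
    (hpos : ∀ k, k ≠ j → 0 < y k) (hsum : ∑ k, y k < π / 2) :
    Tendsto (fun z => fderiv ℝ (fun w => cosSumMulProdSin w ^ p) z (Pi.single j 1))
      (𝓝[{z | (∀ i, 0 < z i) ∧ ∑ i, z i < π / 2}] y) atTop ∧
    ∀ k, k ≠ j →
      Tendsto (fun z => fderiv ℝ (fun w => cosSumMulProdSin w ^ p) z (Pi.single k 1))
        (𝓝[{z | (∀ i, 0 < z i) ∧ ∑ i, z i < π / 2}] y) (𝓝 0) := by
  have hnonneg := nonneg_of_eq_zero_of_pos_of_ne hj hpos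
  have hdiff {l : Filter (ι → ℝ)} : ∀ᶠ z in l, DifferentiableAt ℝ cosSumMulProdSin z :=
    .of_forall differentiable_cosSumMulProdSin
  have hlim := tendsto_cosSumMulProdSin_nhdsGT_zero hj
  refine ⟨tendsto_fderiv_rpow_const_atTop hp₀ hp₁ hdiff hlim
    (fderiv_cosSumMulProdSin_single_pos hj hpos hsum)
    (continuous_fderiv_cosSumMulProdSin_single j).continuousWithinAt, fun k hk =>
    tendsto_fderiv_rpow_const_nhds_zero hp₀ hdiff hlim ?_⟩
  have hcos := (cos_sum_pos hnonneg hsum).ne'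
  have hsin := (sin_pos_of_sum_lt_pi hnonneg (hsum.trans (half_lt_self pi_pos)) (hpos k hk)).ne'
  exact (fderiv_cosSumMulProdSin_single_isBigO hcos hsin).mono nhdsWithin_le_nhds

end CosSumMulProdSin

theorem stmt_7 (n : ℕ) (hn : 1 ≤ n)
    (Ω : Set (Fin (n+1) → ℝ))
    (hΩ : Ω = {y | (∀ j, 0 < y j) ∧ ∑ j, y j < π/2})
    (F : (Fin (n+1) → ℝ) → ℝ)
    (hF : ∀ y, F y = (cos (∑ j, y j) * ∏ j, sin (y j)) ^ ((1:ℝ)/((n:ℝ)+1)))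
    (j : Fin (n+1)) (ystar : Fin (n+1) → ℝ)
    (h1 : ystar j = 0) (h2 : ∀ k, k ≠ j → 0 < ystar k)
    (h3 : ∑ k, ystar k < π/2) :
    Tendsto (fun y => fderiv ℝ F y (Pi.single j 1)) (𝓝[Ω] ystar) atTop ∧
    ∀ k, k ≠ j →
      Tendsto (fun y => fderiv ℝ F y (Pi.single k 1)) (𝓝[Ω] ystar) (𝓝 0) := by
  obtain rfl : F = fun y => cosSumMulProdSin y ^ ((1 : ℝ) / (n + 1)) := funext hF
  have hexp : (1 : ℝ) / (n + 1) < 1 := (div_lt_one (by positivity)).2 (by norm_cast; lia)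
  exact hΩ ▸ stmt_7_general (by positivity) hexp h1 h2 h3
end

section
/- Let V = {(α,t) ∈ ℝ^n × ℝ : α_i > 0 for all i = 1,…,n and |t|·(1 + ∑_{i=1}^{n} α_i) < π/2}. Then for every j ∈ {1,…,n+1} there exists a C^∞ function H_j : V → ℝ such that H_j(α,t) = ∂F/∂y_j(tα_1,…,tα_n,t) whenever (α,t) ∈ V and t > 0, and such that at t = 0 one has H_j(α,0) = (∏_{k=1}^{n} α_k)^{1/(n+1)} / ((n+1) α_j) for j ≤ n and H_{n+1}(α,0) = (∏_{k=1}^{n} α_k)^{1/(n+1)} / (n+1). (This expresses that the gradient of F extends smoothly across the real blow-up of the coamoeba at the vertex at the origin.) -/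
/-!
Substituting `y = t a` with `a` in the open positive orthant resolves the vertex at the origin. As
`sin x = x * sinc x`, each sine contributes one factor `t`, and for `t > 0` the root turns these
into `F (t a) = t G(a, t)`, where `G` is smooth and positive across `t = 0`. Differentiating in `a`
at fixed `t`, the chain rule produces `t` on both sides, so `∂ⱼF (t a) = ∂G/∂aⱼ (a, t)` and the
right-hand side is the required extension. As `G(a, 0)` is the geometric mean of the `aᵢ`, its value
at `t = 0` is the partial derivative of that mean. The theorem is the affine chart in which the last
coordinate of `a` equals `1`.
-/

open Real Finset

open scoped Topology ContDiff

section Sinc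

lemma analyticAt_dslope {𝕜 E : Type*} [NontriviallyNormedField 𝕜] [NormedAddCommGroup E]
    [NormedSpace 𝕜 E] {f : 𝕜 → E} {a b : 𝕜} (ha : AnalyticAt 𝕜 f a) (hb : AnalyticAt 𝕜 f b) :
    AnalyticAt 𝕜 (dslope f a) b := by
  rcases eq_or_ne b a with rfl | hba
  · obtain ⟨p, hp⟩ := ha
    exact ⟨p.fslope, hp.has_fpower_series_dslope_fslope⟩
  · have slope_analytic : AnalyticAt 𝕜 (fun x => (x - a)⁻¹ • (f x - f a)) b :=
      ((analyticAt_id.sub analyticAt_const).inv (sub_ne_zero.mpr hba)).smul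
        (hb.sub analyticAt_const)
    exact slope_analytic.congr (dslope_eventuallyEq_slope_of_ne f hba).symm

lemma contDiff_sinc {m : ℕ∞ω} : ContDiff ℝ m sinc :=
  contDiff_iff_contDiffAt.mpr fun x => by
    rw [sinc_eq_dslope]
    exact (analyticAt_dslope analyticAt_sin analyticAt_sin).contDiffAt

lemma mul_sinc (x : ℝ) : x * sinc x = sin x := by
  rcases eq_or_ne x 0 with rfl | hx
  · simp
  · rw [sinc_of_ne_zero hx, mul_div_cancel₀ _ hx]

lemma sinc_pos_of_abs_lt_pi {x : ℝ} (hx : |x| < π) : 0 < sinc x := by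
  obtain ⟨hl, hr⟩ := abs_lt.mp hx
  rcases lt_trichotomy x 0 with hneg | rfl | hpos
  · rw [sinc_of_ne_zero hneg.ne]
    exact div_pos_of_neg_of_neg (sin_neg_of_neg_of_neg_pi_lt hneg hl) hneg
  · simp
  · rw [sinc_of_ne_zero hpos.ne']
    exact div_pos (sin_pos_of_pos_of_lt_pi hpos hr) hpos

end Sinc

section Calculus

lemma fderiv_smul_eq_of_eventually_eq_smul {𝕜 E G : Type*} [NontriviallyNormedField 𝕜]
    [NormedAddCommGroup E] [NormedSpace 𝕜 E] [NormedAddCommGroup G] [NormedSpace 𝕜 G]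
    {f g : E → G} {t : 𝕜} {a : E} (ht : t ≠ 0)
    (h : ∀ᶠ x in 𝓝 a, f (t • x) = t • g x) : fderiv 𝕜 f (t • a) = fderiv 𝕜 g a := by
  have smul_fderiv_eq : t • fderiv 𝕜 f (t • a) = t • fderiv 𝕜 g a :=
    calc t • fderiv 𝕜 f (t • a) = fderiv 𝕜 (f <| t • ·) a := (fderiv_comp_smul t).symm
      _ = fderiv 𝕜 (t • g) a := Filter.EventuallyEq.fderiv_eq h
      _ = t • fderiv 𝕜 g a := by rw [fderiv_const_smul_field, Pi.smul_apply]
  exact smul_right_injective _ ht smul_fderiv_eq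

lemma fderiv_comp_prodMk_left_apply {𝕜 E₁ E₂ G : Type*} [NontriviallyNormedField 𝕜]
    [NormedAddCommGroup E₁] [NormedSpace 𝕜 E₁] [NormedAddCommGroup E₂] [NormedSpace 𝕜 E₂]
    [NormedAddCommGroup G] [NormedSpace 𝕜 G] {f : E₁ × E₂ → G} {a : E₁} {b : E₂}
    (hf : DifferentiableAt 𝕜 f (a, b)) (v : E₁) :
    fderiv 𝕜 (fun x => f (x, b)) a v = fderiv 𝕜 f (a, b) (v, 0) := by
  have section_deriv := hf.hasFDerivAt.comp a (hasFDerivAt_prodMk_left (𝕜 := 𝕜) a b)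
  exact DFunLike.congr_fun section_deriv.fderiv v

variable {ι : Type*} [Fintype ι] [DecidableEq ι]

lemma fderiv_prod_rpow_single {a : ι → ℝ} (ha : ∀ i, a i ≠ 0) (c : ℝ) (j : ι) :
    fderiv ℝ (fun x : ι → ℝ => (∏ i, x i) ^ c) a (Pi.single j 1) = c * (∏ i, a i) ^ c / a j := by
  have prod_ne : ∏ i, a i ≠ 0 := prod_ne_zero_iff.mpr fun i _ => ha i
  have deriv_prod : (∑ i, (∏ k ∈ univ.erase i, a k) • ContinuousLinearMap.proj (R := ℝ) i)
      (Pi.single j (1 : ℝ)) = (∏ i, a i) / a j := by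
    rw [eq_div_iff (ha j)]
    simp [Pi.single_apply, prod_erase_mul]
  rw [(hasFDerivAt_finsetProd.rpow_const (Or.inl prod_ne)).fderiv, smul_apply,
    deriv_prod, rpow_sub_one prod_ne, smul_eq_mul]
  field_simp

end Calculus

section BlowUp

variable {ι : Type*} [Fintype ι]

/-- The function `F` on the coamoeba, with coordinates indexed by an arbitrary finite type. -/
noncomputable def coamoebaFun (y : ι → ℝ) : ℝ :=
  (cos (∑ i, y i) * ∏ i, sin (y i)) ^ (1 / (Fintype.card ι : ℝ))

/-- The function `coamoebaFun (t • a) / t` in the blow-up coordinates `(a, t)`, with every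
`sin (t * a i) / t` written as `a i * sinc (t * a i)` so that it makes sense at `t = 0`. -/
noncomputable def blowupFun (p : (ι → ℝ) × ℝ) : ℝ :=
  (cos (p.2 * ∑ i, p.1 i) * ∏ i, p.1 i * sinc (p.2 * p.1 i)) ^ (1 / (Fintype.card ι : ℝ))

variable (ι) in
/-- The pairs `(a, t)` of a positive direction and a scale of either sign on which `blowupFun` is
smooth; the part with `t > 0` lies over the domain of `F`, and `t = 0` is the exceptional locus. -/
def blowupDomain : Set ((ι → ℝ) × ℝ) :=
  {p | (∀ i, 0 < p.1 i) ∧ |p.2| * ∑ i, p.1 i < π / 2}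

lemma isOpen_blowupDomain : IsOpen (blowupDomain ι) := by
  simp only [blowupDomain, Set.ofPred_and, Set.ofPred_forall]
  exact (isOpen_iInter_of_finite fun i => isOpen_lt (by fun_prop) (by fun_prop)).inter
    (isOpen_lt (by fun_prop) (by fun_prop))

variable {p : (ι → ℝ) × ℝ}

lemma cos_mul_sum_pos (hp : p ∈ blowupDomain ι) : 0 < cos (p.2 * ∑ i, p.1 i) := by
  have direction_sum_nonneg : 0 ≤ ∑ i, p.1 i := sum_nonneg fun i _ => (hp.1 i).le
  apply cos_pos_of_mem_Ioo
  rw [Set.mem_Ioo, ← abs_lt, abs_mul, abs_of_nonneg direction_sum_nonneg]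
  exact hp.2

lemma mul_sinc_mul_pos (hp : p ∈ blowupDomain ι) (i : ι) : 0 < p.1 i * sinc (p.2 * p.1 i) := by
  refine mul_pos (hp.1 i) (sinc_pos_of_abs_lt_pi ?_)
  calc |p.2 * p.1 i| = |p.2| * p.1 i := by rw [abs_mul, abs_of_pos (hp.1 i)]
    _ ≤ |p.2| * ∑ k, p.1 k := by
      gcongr
      exact single_le_sum (fun k _ => (hp.1 k).le) (mem_univ i)
    _ < π / 2 := hp.2
    _ < π := half_lt_self pi_pos

lemma blowupFun_base_pos (hp : p ∈ blowupDomain ι) :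
    0 < cos (p.2 * ∑ i, p.1 i) * ∏ i, p.1 i * sinc (p.2 * p.1 i) :=
  mul_pos (cos_mul_sum_pos hp) (prod_pos fun i _ => mul_sinc_mul_pos hp i)

lemma contDiffAt_blowupFun {m : ℕ∞ω} (hp : p ∈ blowupDomain ι) : ContDiffAt ℝ m blowupFun p := by
  have coord_contDiff (i : ι) : ContDiff ℝ m fun q : (ι → ℝ) × ℝ => q.1 i := by fun_prop
  have cos_contDiff : ContDiff ℝ m fun q : (ι → ℝ) × ℝ => cos (q.2 * ∑ i, q.1 i) := by fun_prop
  have prod_contDiff : ContDiff ℝ m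
      fun q : (ι → ℝ) × ℝ => ∏ i, q.1 i * sinc (q.2 * q.1 i) :=
    contDiff_prod fun i _ =>
      (coord_contDiff i).mul (contDiff_sinc.comp (contDiff_snd.mul (coord_contDiff i)))
  exact (cos_contDiff.mul prod_contDiff).contDiffAt.rpow_const_of_ne (blowupFun_base_pos hp).ne'

lemma coamoebaFun_smul [Nonempty ι] (hp : p ∈ blowupDomain ι) (ht : 0 < p.2) :
    coamoebaFun (p.2 • p.1) = p.2 * blowupFun p := by
  have sin_eq (i : ι) : sin (p.2 * p.1 i) = p.2 * (p.1 i * sinc (p.2 * p.1 i)) := by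
    rw [← mul_assoc, mul_sinc]
  have base_eq : cos (∑ i, (p.2 • p.1) i) * ∏ i, sin ((p.2 • p.1) i) =
      p.2 ^ Fintype.card ι * (cos (p.2 * ∑ i, p.1 i) * ∏ i, p.1 i * sinc (p.2 * p.1 i)) := by
    simp only [Pi.smul_apply, smul_eq_mul, ← mul_sum, sin_eq, ← pow_card_mul_prod, card_univ]
    ring
  rw [coamoebaFun, base_eq, mul_rpow (by positivity) (blowupFun_base_pos hp).le, one_div,
    pow_rpow_inv_natCast ht.le Fintype.card_ne_zero, blowupFun, one_div]

lemma blowupFun_zero (a : ι → ℝ) : blowupFun (a, 0) = (∏ i, a i) ^ (1 / (Fintype.card ι : ℝ)) := by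
  simp [blowupFun]

variable [DecidableEq ι]

/-- The derivative of `blowupFun` in the `j`-th direction coordinate, at fixed scale `t`. It is the
smooth extension of the `j`-th partial derivative of `coamoebaFun` to the blow-up. -/
noncomputable def blowupPartial (j : ι) (p : (ι → ℝ) × ℝ) : ℝ :=
  fderiv ℝ blowupFun p (Pi.single j 1, 0)

lemma contDiffOn_blowupPartial {m : ℕ∞ω} (j : ι) :
    ContDiffOn ℝ m (blowupPartial j) (blowupDomain ι) := fun _ hp =>
  ((contDiffAt_blowupFun hp).fderiv_right_succ.clm_apply contDiffAt_const).contDiffWithinAt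

lemma fderiv_blowupFun_left (hp : p ∈ blowupDomain ι) (j : ι) :
    fderiv ℝ (fun a => blowupFun (a, p.2)) p.1 (Pi.single j 1) = blowupPartial j p :=
  fderiv_comp_prodMk_left_apply ((contDiffAt_blowupFun hp).differentiableAt one_ne_zero) _

lemma blowupPartial_eq_fderiv_coamoebaFun [Nonempty ι] (hp : p ∈ blowupDomain ι) (ht : 0 < p.2)
    (j : ι) : blowupPartial j p = fderiv ℝ coamoebaFun (p.2 • p.1) (Pi.single j 1) := by
  have near_p : ∀ᶠ a in 𝓝 p.1, (a, p.2) ∈ blowupDomain ι :=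
    (Continuous.prodMk_left p.2).continuousAt.eventually (isOpen_blowupDomain.mem_nhds hp)
  have fderiv_eq : fderiv ℝ coamoebaFun (p.2 • p.1) = fderiv ℝ (fun a => blowupFun (a, p.2)) p.1 :=
    fderiv_smul_eq_of_eventually_eq_smul ht.ne' <|
      near_p.mono fun a ha => coamoebaFun_smul (p := (a, p.2)) ha ht
  rw [fderiv_eq, fderiv_blowupFun_left hp]

lemma blowupPartial_zero {a : ι → ℝ} (ha : (a, 0) ∈ blowupDomain ι) (j : ι) :
    blowupPartial j (a, 0) =
      (∏ i, a i) ^ (1 / (Fintype.card ι : ℝ)) / (Fintype.card ι * a j) := by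
  rw [← fderiv_blowupFun_left ha]
  simp only [blowupFun_zero]
  rw [fderiv_prod_rpow_single fun i => (ha.1 i).ne']
  ring

end BlowUp

section AffineChart

variable {n : ℕ}

/-- The affine chart of the blow-up in which the last coordinate of the direction is `1`. -/
def affineChart (p : (Fin n → ℝ) × ℝ) : (Fin (n + 1) → ℝ) × ℝ :=
  (Fin.snoc p.1 1, p.2)

lemma contDiff_affineChart {m : ℕ∞ω} : ContDiff ℝ m (affineChart (n := n)) := by
  refine (contDiff_pi' fun i => ?_).prodMk contDiff_snd
  cases i using Fin.lastCases with
  | last => simpa only [Fin.snoc_last] using contDiff_const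
  | cast i => simpa only [Fin.snoc_castSucc] using by fun_prop

lemma affineChart_mem_blowupDomain {p : (Fin n → ℝ) × ℝ} :
    affineChart p ∈ blowupDomain (Fin (n + 1)) ↔
      (∀ i, 0 < p.1 i) ∧ |p.2| * (1 + ∑ i, p.1 i) < π / 2 := by
  simp [affineChart, blowupDomain, Fin.forall_fin_succ', add_comm]

end AffineChart

theorem stmt_8 (n : ℕ) (hn : 1 ≤ n)
    (F : (Fin (n+1) → ℝ) → ℝ)
    (hF : ∀ y, F y = (cos (∑ j, y j) * ∏ j, sin (y j)) ^ ((1:ℝ)/((n:ℝ)+1)))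
    (V : Set ((Fin n → ℝ) × ℝ))
    (hV : V = {p | (∀ i, 0 < p.1 i) ∧ |p.2| * (1 + ∑ i, p.1 i) < π/2})
    (ι : (Fin n → ℝ) × ℝ → (Fin (n+1) → ℝ))
    (hι : ∀ p i, ι p i = if h : (i : ℕ) < n then p.2 * p.1 ⟨i, h⟩ else p.2) :
    ∀ j : Fin (n+1), ∃ H : (Fin n → ℝ) × ℝ → ℝ,
      ContDiffOn ℝ (⊤ : ℕ∞) H V ∧
      (∀ p ∈ V, 0 < p.2 → H p = fderiv ℝ F (ι p) (Pi.single j 1)) ∧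
      (∀ α : Fin n → ℝ, (α, (0:ℝ)) ∈ V →
        H (α, 0) = if h : (j : ℕ) < n
          then (∏ k, α k) ^ ((1:ℝ)/((n:ℝ)+1)) / (((n:ℝ)+1) * α ⟨j, h⟩)
          else (∏ k, α k) ^ ((1:ℝ)/((n:ℝ)+1)) / ((n:ℝ)+1)) := by
  obtain rfl : F = coamoebaFun := funext fun y => by simp [hF, coamoebaFun]
  obtain rfl : V = affineChart ⁻¹' blowupDomain (Fin (n + 1)) := by
    simp only [hV, ← affineChart_mem_blowupDomain, Set.preimage]
  have ι_eq (p) : ι p = (affineChart p).2 • (affineChart p).1 := by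
    ext i
    cases i using Fin.lastCases <;> simp [hι, affineChart]
  intro j
  refine ⟨blowupPartial j ∘ affineChart,
    (contDiffOn_blowupPartial j).comp contDiff_affineChart.contDiffOn (Set.mapsTo_preimage _ _),
    fun p hp ht => ?_, fun α hα => ?_⟩
  · rw [ι_eq]
    exact blowupPartial_eq_fderiv_coamoebaFun hp ht j
  · refine (blowupPartial_zero hα j).trans ?_
    cases j using Fin.lastCases <;> simp
end

section
/- For n = 1 and for n = 2, the Hessian of F is negative definite at every point of Ω: for every y ∈ Ω and every nonzero vector v ∈ ℝ^{n+1}, one has ∑_{j,k=1}^{n+1} (∂²F/∂y_j∂y_k)(y) · v_j v_k < 0. In particular, the Jacobian determinant of the gradient map ∇F : Ω → ℝ^{n+1} is nonzero at every point of Ω, so ∇F is a local diffeomorphism. -/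
open Real Finset

/-!
On `Ω` one has `F = exp (p * G)` with `G y = log (cos (∑ y)) + ∑ log (sin (y j))` and
`p = 1 / (n + 1)`, hence `D²F = p * F * (p * DG ⊗ DG + D²G)`. Writing `c j = cot (y j) > 0`,
`t = tan (∑ y) ≥ 0` and `S = ∑ v j`, negative definiteness amounts to
`p * (∑ c j * v j - t * S)² < ∑ (1 + c j²) * v j² + (1 + t²) * S²`.
Cauchy–Schwarz for the `n + 2` numbers `c j * v j` and `-t * S` would need `p ≤ 1 / (n + 2)`.
But some `v i` has the same sign as `S`, and merging `-t * S` into `c i * v i` leaves only `n + 1`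
numbers without increasing the sum of squares.
-/

open scoped Topology

section QuadraticForm

variable {ι R : Type*} [CommRing R] [LinearOrder R] [IsStrictOrderedRing R]

theorem sq_sum_sub_le_card_mul_of_mul_nonneg {s : Finset ι} {w : ι → R} {r : R} {i : ι}
    (hi : i ∈ s) (hwr : 0 ≤ w i * r) :
    (∑ j ∈ s, w j - r) ^ 2 ≤ #s * (∑ j ∈ s, w j ^ 2 + r ^ 2) := by
  classical
  let u : ι → R := w - Pi.single i r
  have sum_u : ∑ j ∈ s, u j = ∑ j ∈ s, w j - r := by
    simp [u, sum_sub_distrib, sum_pi_single', hi]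
  have sum_sq_u : ∑ j ∈ s, u j ^ 2 = ∑ j ∈ s, w j ^ 2 + (r ^ 2 - 2 * (w i * r)) := by
    have sq_u (j : ι) : u j ^ 2 = w j ^ 2 + if j = i then r ^ 2 - 2 * (w i * r) else 0 := by
      by_cases hj : j = i
      · subst hj
        simp only [u, Pi.sub_apply, Pi.single_eq_same, if_pos]
        ring
      · simp [u, hj]
    simp [sq_u, sum_add_distrib, hi]
  calc (∑ j ∈ s, w j - r) ^ 2 = (∑ j ∈ s, u j) ^ 2 := by rw [sum_u]
    _ ≤ #s * ∑ j ∈ s, u j ^ 2 := sq_sum_le_card_mul_sum_sq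
    _ ≤ #s * (∑ j ∈ s, w j ^ 2 + r ^ 2) := by
      rw [sum_sq_u]
      gcongr
      linarith

theorem exists_mul_sum_nonneg {s : Finset ι} (hs : s.Nonempty) (v : ι → R) :
    ∃ i ∈ s, 0 ≤ v i * ∑ j ∈ s, v j := by
  refine exists_le_of_sum_le hs ?_
  rw [sum_const_zero, ← sum_mul]
  exact mul_self_nonneg _

theorem mul_sq_sum_sub_lt [Fintype ι] {p t : R} {c v : ι → R} (hp : 0 ≤ p)
    (hpι : p * Fintype.card ι ≤ 1) (hc : ∀ j, 0 ≤ c j) (ht : 0 ≤ t) (hv : v ≠ 0) :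
    p * (∑ j, c j * v j - t * ∑ j, v j) ^ 2 <
      ∑ j, (1 + c j ^ 2) * v j ^ 2 + (1 + t ^ 2) * (∑ j, v j) ^ 2 := by
  obtain ⟨k, hk⟩ := Function.ne_iff.mp hv
  obtain ⟨i, -, hi⟩ := exists_mul_sum_nonneg ⟨k, mem_univ k⟩ v
  set S := ∑ j, v j
  have hsign : 0 ≤ c i * v i * (t * S) := by
    rw [mul_mul_mul_comm]
    exact mul_nonneg (mul_nonneg (hc i) ht) hi
  have hv_sq : 0 < ∑ j, v j ^ 2 :=
    sum_pos' (fun j _ => sq_nonneg (v j)) ⟨k, mem_univ k, sq_pos_of_ne_zero hk⟩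
  calc p * (∑ j, c j * v j - t * S) ^ 2
      ≤ p * (Fintype.card ι * (∑ j, (c j * v j) ^ 2 + (t * S) ^ 2)) := by
        gcongr
        exact sq_sum_sub_le_card_mul_of_mul_nonneg (mem_univ i) hsign
    _ = p * Fintype.card ι * (∑ j, (c j * v j) ^ 2 + (t * S) ^ 2) := by ring
    _ ≤ ∑ j, (c j * v j) ^ 2 + (t * S) ^ 2 := mul_le_of_le_one_left (by positivity) hpι
    _ < (∑ j, v j ^ 2 + ∑ j, (c j * v j) ^ 2) + (S ^ 2 + (t * S) ^ 2) := by
        linarith [sq_nonneg S]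
    _ = ∑ j, (1 + c j ^ 2) * v j ^ 2 + (1 + t ^ 2) * S ^ 2 := by
        rw [← sum_add_distrib]
        simp only [add_mul, one_mul, mul_pow]

end QuadraticForm

theorem det_ne_zero_of_quadraticForm_ne_zero {ι R : Type*} [Fintype ι] [DecidableEq ι]
    [CommRing R] [IsDomain R] {M : Matrix ι ι R}
    (hM : ∀ v : ι → R, v ≠ 0 → ∑ j, ∑ k, M j k * v j * v k ≠ 0) : M.det ≠ 0 := by
  intro hdet
  obtain ⟨v, hv, hMv⟩ := Matrix.exists_mulVec_eq_zero_iff.mpr hdet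
  refine hM v hv ?_
  calc ∑ j, ∑ k, M j k * v j * v k = M.toBilin' v v := by
        simp only [Matrix.toBilin'_apply, mul_comm (v _)]
    _ = 0 := by rw [Matrix.toBilin'_apply', hMv, dotProduct_zero]

section SecondDerivative

theorem sum_sum_fderiv_fderiv_single {𝕜 ι : Type*} [NontriviallyNormedField 𝕜] [Fintype ι]
    [DecidableEq ι] {f : (ι → 𝕜) → 𝕜} {y : ι → 𝕜} (hf : DifferentiableAt 𝕜 (fderiv 𝕜 f) y)
    (v : ι → 𝕜) :
    ∑ j, ∑ k, fderiv 𝕜 (fun z => fderiv 𝕜 f z (Pi.single j 1)) y (Pi.single k 1) * v j * v k =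
      fderiv 𝕜 (fderiv 𝕜 f) y v v := by
  have hpartial (j k : ι) :
      fderiv 𝕜 (fun z => fderiv 𝕜 f z (Pi.single j 1)) y (Pi.single k 1) =
        fderiv 𝕜 (fderiv 𝕜 f) y (Pi.single k 1) (Pi.single j 1) := by
    simp [fderiv_clm_apply hf (differentiableAt_const _)]
  have hv : v = ∑ j, v j • Pi.single j 1 := by simp [← Pi.single_smul, univ_sum_single]
  conv_rhs => rw [hv]
  simp only [hpartial, map_sum, map_smul, _root_.sum_apply, smul_apply, smul_eq_mul, mul_sum]
  exact sum_congr rfl fun j _ => sum_congr rfl fun k _ => by ring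

theorem hasFDerivAt_fderiv_exp {E : Type*} [NormedAddCommGroup E] [NormedSpace ℝ E] {g : E → ℝ}
    {g' : E → E →L[ℝ] ℝ} {g'' : E →L[ℝ] E →L[ℝ] ℝ} {y : E}
    (hg : ∀ᶠ z in 𝓝 y, HasFDerivAt g (g' z) z) (hg' : HasFDerivAt g' g'' y) :
    HasFDerivAt (fderiv ℝ fun z => exp (g z))
      (exp (g y) • (g'' + (g' y).smulRight (g' y))) y := by
  have hfderiv : (fderiv ℝ fun z => exp (g z)) =ᶠ[𝓝 y] fun z => exp (g z) • g' z :=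
    hg.mono fun z hz => hz.exp.fderiv
  refine ((hg.self_of_nhds.exp.smul hg').congr_of_eventuallyEq hfderiv).congr_fderiv ?_
  ext u v
  simp only [add_apply, smul_apply, ContinuousLinearMap.smulRight_apply, smul_eq_mul]
  ring

theorem hasDerivAt_tan_one_add_sq {x : ℝ} (hx : cos x ≠ 0) :
    HasDerivAt tan (1 + tan x ^ 2) x := by
  refine (hasDerivAt_tan hx).congr_deriv ?_
  rw [one_div, ← inv_one_add_tan_sq hx, inv_inv]

theorem hasDerivAt_cot {x : ℝ} (hx : sin x ≠ 0) : HasDerivAt cot (-(1 + cot x ^ 2)) x := by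
  rw [funext cot_eq_cos_div_sin]
  refine ((hasDerivAt_cos x).div (hasDerivAt_sin x) hx).congr_deriv ?_
  field_simp
  ring

end SecondDerivative

section CosSin

variable {ι : Type*} [Fintype ι]

/-- The domain `Ω`, for an arbitrary finite set of coordinates. -/
def angleSimplex (ι : Type*) [Fintype ι] : Set (ι → ℝ) :=
  {y | (∀ j, 0 < y j) ∧ ∑ j, y j < π / 2}

/-- The function `F`, with an arbitrary exponent `p` in place of `1 / (n + 1)`. -/
noncomputable def cosSinPow (p : ℝ) (y : ι → ℝ) : ℝ :=
  (cos (∑ j, y j) * ∏ j, sin (y j)) ^ p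

/-- The function `G` with `F = exp (p * G)` on `Ω`. -/
noncomputable def logCosSin (y : ι → ℝ) : ℝ :=
  log (cos (∑ j, y j)) + ∑ j, log (sin (y j))

/-- The sum of the coordinates as a continuous linear form. -/
noncomputable def coordSum (ι : Type*) [Fintype ι] : (ι → ℝ) →L[ℝ] ℝ :=
  ∑ j, ContinuousLinearMap.proj j

/-- The derivative of `logCosSin`, as a linear form. -/
noncomputable def logCosSinDeriv (y : ι → ℝ) : (ι → ℝ) →L[ℝ] ℝ :=
  ∑ j, cot (y j) • ContinuousLinearMap.proj j - tan (∑ j, y j) • coordSum ι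

/-- The second derivative of `logCosSin`, as a curried bilinear form. -/
noncomputable def logCosSinDeriv₂ (y : ι → ℝ) : (ι → ℝ) →L[ℝ] (ι → ℝ) →L[ℝ] ℝ :=
  -(∑ j, (1 + cot (y j) ^ 2) •
      (ContinuousLinearMap.proj j).smulRight (ContinuousLinearMap.proj j) +
    (1 + tan (∑ j, y j) ^ 2) • (coordSum ι).smulRight (coordSum ι))

theorem isOpen_angleSimplex : IsOpen (angleSimplex ι) := by
  simp only [angleSimplex, Set.ofPred_and, Set.ofPred_forall]
  exact (isOpen_iInter_of_finite fun j => isOpen_lt continuous_const (continuous_apply j)).inter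
    (isOpen_lt (by fun_prop) continuous_const)

theorem sum_nonneg_of_mem_angleSimplex {y : ι → ℝ} (hy : y ∈ angleSimplex ι) : 0 ≤ ∑ j, y j :=
  sum_nonneg fun j _ => (hy.1 j).le

theorem lt_pi_div_two_of_mem_angleSimplex {y : ι → ℝ} (hy : y ∈ angleSimplex ι) (j : ι) :
    y j < π / 2 :=
  (single_le_sum (fun k _ => (hy.1 k).le) (mem_univ j)).trans_lt hy.2

theorem cos_sum_pos_of_mem_angleSimplex {y : ι → ℝ} (hy : y ∈ angleSimplex ι) :
    0 < cos (∑ j, y j) :=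
  cos_pos_of_mem_Ioo ⟨by linarith [pi_pos, sum_nonneg_of_mem_angleSimplex hy], hy.2⟩

theorem sin_pos_of_mem_angleSimplex {y : ι → ℝ} (hy : y ∈ angleSimplex ι) (j : ι) :
    0 < sin (y j) :=
  sin_pos_of_pos_of_lt_pi (hy.1 j) (by linarith [pi_pos, lt_pi_div_two_of_mem_angleSimplex hy j])

theorem tan_sum_nonneg_of_mem_angleSimplex {y : ι → ℝ} (hy : y ∈ angleSimplex ι) :
    0 ≤ tan (∑ j, y j) :=
  tan_nonneg_of_nonneg_of_le_pi_div_two (sum_nonneg_of_mem_angleSimplex hy) hy.2.le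

theorem cot_pos_of_mem_angleSimplex {y : ι → ℝ} (hy : y ∈ angleSimplex ι) (j : ι) :
    0 < cot (y j) := by
  rw [← inv_pos, cot_inv_eq_tan]
  exact tan_pos_of_pos_of_lt_pi_div_two (hy.1 j) (lt_pi_div_two_of_mem_angleSimplex hy j)

theorem cosSinPow_eq_exp {y : ι → ℝ} (hy : y ∈ angleSimplex ι) (p : ℝ) :
    cosSinPow p y = exp (p * logCosSin y) := by
  have hcos := cos_sum_pos_of_mem_angleSimplex hy
  have hsin := sin_pos_of_mem_angleSimplex hy
  have hprod : 0 < ∏ j, sin (y j) := prod_pos fun j _ => hsin j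
  rw [cosSinPow, logCosSin, rpow_def_of_pos (mul_pos hcos hprod), log_mul hcos.ne' hprod.ne',
    log_prod fun j _ => (hsin j).ne', mul_comm]

theorem hasFDerivAt_sum_coord (y : ι → ℝ) :
    HasFDerivAt (fun z : ι → ℝ => ∑ j, z j) (coordSum ι) y :=
  HasFDerivAt.fun_sum fun j _ => hasFDerivAt_apply j y

theorem hasFDerivAt_logCosSin {y : ι → ℝ} (hcos : cos (∑ j, y j) ≠ 0)
    (hsin : ∀ j, sin (y j) ≠ 0) : HasFDerivAt logCosSin (logCosSinDeriv y) y := by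
  have hlogcos := (hasFDerivAt_sum_coord y).cos.log hcos
  have hlogsin (j : ι) := (hasFDerivAt_apply (𝕜 := ℝ) j y).sin.log (hsin j)
  refine (hlogcos.add (HasFDerivAt.fun_sum fun j _ => hlogsin j)).congr_fderiv ?_
  ext v
  simp [logCosSinDeriv, cot_eq_cos_div_sin, tan_eq_sin_div_cos, div_eq_inv_mul, mul_assoc,
    neg_add_eq_sub]

theorem hasFDerivAt_logCosSinDeriv {y : ι → ℝ} (hcos : cos (∑ j, y j) ≠ 0)
    (hsin : ∀ j, sin (y j) ≠ 0) : HasFDerivAt logCosSinDeriv (logCosSinDeriv₂ y) y := by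
  have htan := (hasDerivAt_tan_one_add_sq hcos).comp_hasFDerivAt y (hasFDerivAt_sum_coord y)
  have hcot (j : ι) :=
    (hasDerivAt_cot (hsin j)).comp_hasFDerivAt y (hasFDerivAt_apply (𝕜 := ℝ) j y)
  have hcot_smul (j : ι) :=
    (hcot j).smul_const (ContinuousLinearMap.proj j : (ι → ℝ) →L[ℝ] ℝ)
  refine ((HasFDerivAt.fun_sum fun j _ => hcot_smul j).fun_sub
    (htan.smul_const (coordSum ι))).congr_fderiv ?_
  ext u v
  simp [logCosSinDeriv₂, mul_assoc, -neg_add_rev, ← neg_add']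

theorem hasFDerivAt_fderiv_cosSinPow {y : ι → ℝ} (hy : y ∈ angleSimplex ι) (p : ℝ) :
    HasFDerivAt (fderiv ℝ (cosSinPow p))
      (exp (p * logCosSin y) • (p • logCosSinDeriv₂ y +
        (p • logCosSinDeriv y).smulRight (p • logCosSinDeriv y))) y := by
  have hmem : ∀ᶠ z in 𝓝 y, z ∈ angleSimplex ι := isOpen_angleSimplex.mem_nhds hy
  have hexp : cosSinPow p =ᶠ[𝓝 y] fun z => exp (p * logCosSin z) :=
    hmem.mono fun z hz => cosSinPow_eq_exp hz p
  have hcos {z : ι → ℝ} (hz : z ∈ angleSimplex ι) := (cos_sum_pos_of_mem_angleSimplex hz).ne'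
  have hsin {z : ι → ℝ} (hz : z ∈ angleSimplex ι) (j : ι) :=
    (sin_pos_of_mem_angleSimplex hz j).ne'
  have hderiv : ∀ᶠ z in 𝓝 y,
      HasFDerivAt (fun z => p * logCosSin z) (p • logCosSinDeriv z) z :=
    hmem.mono fun z hz => (hasFDerivAt_logCosSin (hcos hz) (hsin hz)).const_mul p
  have hderiv₂ : HasFDerivAt (fun z => p • logCosSinDeriv z) (p • logCosSinDeriv₂ y) y :=
    (hasFDerivAt_logCosSinDeriv (hcos hy) (hsin hy)).fun_const_smul p
  exact (hasFDerivAt_fderiv_exp hderiv hderiv₂).congr_of_eventuallyEq hexp.fderiv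

theorem fderiv_fderiv_cosSinPow_neg {p : ℝ} (hp : 0 < p) (hpι : p * Fintype.card ι ≤ 1)
    {y : ι → ℝ} (hy : y ∈ angleSimplex ι) {v : ι → ℝ} (hv : v ≠ 0) :
    fderiv ℝ (fderiv ℝ (cosSinPow p)) y v v < 0 := by
  have hform := mul_sq_sum_sub_lt hp.le hpι (fun j => (cot_pos_of_mem_angleSimplex hy j).le)
    (tan_sum_nonneg_of_mem_angleSimplex hy) hv
  have hderiv : logCosSinDeriv y v = ∑ j, cot (y j) * v j - tan (∑ j, y j) * ∑ j, v j := by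
    simp [logCosSinDeriv, coordSum]
  have hderiv₂ : logCosSinDeriv₂ y v v =
      -(∑ j, (1 + cot (y j) ^ 2) * v j ^ 2 + (1 + tan (∑ j, y j) ^ 2) * (∑ j, v j) ^ 2) := by
    simp [logCosSinDeriv₂, coordSum, ← sq]
  rw [← hderiv, ← neg_lt_neg_iff, ← hderiv₂] at hform
  calc fderiv ℝ (fderiv ℝ (cosSinPow p)) y v v
      = exp (p * logCosSin y) * p * (logCosSinDeriv₂ y v v + p * logCosSinDeriv y v ^ 2) := by
        rw [(hasFDerivAt_fderiv_cosSinPow hy p).fderiv]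
        simp only [add_apply, smul_apply, ContinuousLinearMap.smulRight_apply, smul_eq_mul]
        ring
    _ < 0 := mul_neg_of_pos_of_neg (by positivity) (by linarith)

theorem stmt_9_general [DecidableEq ι] {p : ℝ} (hp : 0 < p) (hpι : p * Fintype.card ι ≤ 1)
    {y : ι → ℝ} (hy : y ∈ angleSimplex ι) :
    (∀ v : ι → ℝ, v ≠ 0 →
      ∑ j, ∑ k,
        fderiv ℝ (fun z => fderiv ℝ (cosSinPow p) z (Pi.single j 1)) y (Pi.single k 1) * v j * v k
        < 0) ∧
    Matrix.det (Matrix.of fun j k : ι =>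
      fderiv ℝ (fun z => fderiv ℝ (cosSinPow p) z (Pi.single j 1)) y (Pi.single k 1)) ≠ 0 := by
  have hneg (v : ι → ℝ) (hv : v ≠ 0) :=
    (sum_sum_fderiv_fderiv_single (hasFDerivAt_fderiv_cosSinPow hy p).differentiableAt v).trans_lt
      (fderiv_fderiv_cosSinPow_neg hp hpι hy hv)
  exact ⟨hneg, det_ne_zero_of_quadraticForm_ne_zero fun v hv => (hneg v hv).ne⟩

end CosSin

theorem stmt_9 (n : ℕ) (hn : n = 1 ∨ n = 2)
    (Ω : Set (Fin (n+1) → ℝ))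
    (hΩ : Ω = {y | (∀ j, 0 < y j) ∧ ∑ j, y j < π/2})
    (F : (Fin (n+1) → ℝ) → ℝ)
    (hF : ∀ y, F y = (cos (∑ j, y j) * ∏ j, sin (y j)) ^ ((1:ℝ)/((n:ℝ)+1))) :
    ∀ y ∈ Ω,
      (∀ v : Fin (n+1) → ℝ, v ≠ 0 →
        ∑ j, ∑ k,
          fderiv ℝ (fun z => fderiv ℝ F z (Pi.single j 1)) y (Pi.single k 1) * v j * v k
          < 0) ∧
      Matrix.det (Matrix.of fun j k : Fin (n+1) =>
        fderiv ℝ (fun z => fderiv ℝ F z (Pi.single j 1)) y (Pi.single k 1)) ≠ 0 := by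
  obtain ⟨rfl, rfl⟩ : Ω = angleSimplex (Fin (n + 1)) ∧ F = cosSinPow (1 / ((n : ℝ) + 1)) :=
    ⟨hΩ, funext hF⟩
  exact fun y hy => stmt_9_general (by positivity) (by simp [field]) hy
end

section
/- Let s ⊆ ℝ^m be a convex open set and let g : ℝ^m → ℝ^m be differentiable on s. Suppose that for every x ∈ s the derivative Dg(x) is negative definite, i.e. ⟨Dg(x)v, v⟩ < 0 for every nonzero v ∈ ℝ^m (where ⟨·,·⟩ is the Euclidean inner product). Then g is injective on s. (In particular, the gradient of a function with everywhere negative definite Hessian on a convex open set is injective.) -/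
open RealInnerProductSpace

section NormedSpace

variable {E F : Type*} [NormedAddCommGroup E] [NormedSpace ℝ E]
  [NormedAddCommGroup F] [NormedSpace ℝ F]
  {s : Set E} {g : E → F} {g' : E → E →L[ℝ] F}

theorem exists_mem_segment_dual_sub_eq_dual_fderiv (hs : Convex ℝ s)
    (hg : ∀ x ∈ s, HasFDerivWithinAt g (g' x) s x) (ℓ : StrongDual ℝ F)
    {x y : E} (hx : x ∈ s) (hy : y ∈ s) :
    ∃ z ∈ segment ℝ x y, ℓ (g y - g x) = ℓ (g' z (y - x)) := by
  simpa only [map_sub, Function.comp_apply, ContinuousLinearMap.comp_apply] using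
    domain_mvt (fun z hz => ℓ.hasFDerivAt.comp_hasFDerivWithinAt z (hg z hz)) hs hx hy

/- `ℓ` is chosen before `z` because the mean value theorem holds for the scalar function `ℓ ∘ g`,
not for `g` itself. -/
theorem injOn_of_forall_exists_dual_fderiv_ne_zero (hs : Convex ℝ s)
    (hg : ∀ x ∈ s, HasFDerivWithinAt g (g' x) s x)
    (hg' : ∀ v ≠ 0, ∃ ℓ : StrongDual ℝ F, ∀ z ∈ s, ℓ (g' z v) ≠ 0) :
    Set.InjOn g s := by
  intro x hx y hy hxy
  by_contra hne
  obtain ⟨ℓ, hℓ⟩ := hg' (y - x) (sub_ne_zero.mpr (Ne.symm hne))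
  obtain ⟨z, hz, hmean⟩ := exists_mem_segment_dual_sub_eq_dual_fderiv hs hg ℓ hx hy
  have hzero : ℓ (g' z (y - x)) = 0 := by rw [← hmean, hxy, sub_self, map_zero]
  exact hℓ z (hs.segment_subset hx hy hz) hzero

end NormedSpace

theorem stmt_11_general {E : Type*} [NormedAddCommGroup E] [InnerProductSpace ℝ E]
    {s : Set E} (hs : Convex ℝ s) {g : E → E} {g' : E → E →L[ℝ] E}
    (hg : ∀ x ∈ s, HasFDerivWithinAt g (g' x) s x)
    (hg' : ∀ x ∈ s, ∀ v ≠ 0, ⟪g' x v, v⟫ ≠ 0) :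
    Set.InjOn g s := by
  refine injOn_of_forall_exists_dual_fderiv_ne_zero hs hg fun v hv => ⟨innerSL ℝ v, fun x hx => ?_⟩
  rw [innerSL_apply_apply, real_inner_comm]
  exact hg' x hx v hv

theorem stmt_11 (m : ℕ)
    (s : Set (EuclideanSpace ℝ (Fin m)))
    (hconv : Convex ℝ s) (hopen : IsOpen s)
    (g : EuclideanSpace ℝ (Fin m) → EuclideanSpace ℝ (Fin m))
    (g' : EuclideanSpace ℝ (Fin m) →
      (EuclideanSpace ℝ (Fin m) →L[ℝ] EuclideanSpace ℝ (Fin m)))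
    (hderiv : ∀ x ∈ s, HasFDerivAt g (g' x) x)
    (hneg : ∀ x ∈ s, ∀ v : EuclideanSpace ℝ (Fin m), v ≠ 0 → ⟪g' x v, v⟫ < 0) :
    Set.InjOn g s :=
  stmt_11_general hconv (fun x hx => (hderiv x hx).hasFDerivWithinAt)
    fun x hx v hv => (hneg x hx v hv).ne
end

section
/- Let n ≥ 1 and let a ∈ (0, π/2). Then the function ρ(t) = cos((a + π/2)t) / (cos(πt/2))^{n/(n+1)} (real power of the positive number cos(πt/2)) is differentiable on (0,1) and satisfies ρ'(t) < 0 for every t ∈ (0,1). -/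
open Real

/-!
Up to the positive factor `cos (β * t) ^ (p + 1)`, the derivative of
`cos (α * t) / cos (β * t) ^ p` is `p * β * (cos x * sin y) - α * (sin x * cos y)` with `x = α * t`
and `y = β * t`. Since `sin x * cos y > 0` and `sin x * cos y - cos x * sin y = sin (x - y) > 0`, it
is negative as soon as `0 ≤ p * β ≤ α`. Here `α = a + π / 2` and `β = π / 2`, so `x - y = a * t`.
-/

lemma hasDerivAt_div_rpow_const {f g : ℝ → ℝ} {f' g' p x : ℝ} (hf : HasDerivAt f f' x)
    (hg : HasDerivAt g g' x) (hgx : 0 < g x) :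
    HasDerivAt (fun y ↦ f y / g y ^ p) ((f' * g x - p * f x * g') / g x ^ (p + 1)) x := by
  have hpow : 0 < g x ^ p := rpow_pos_of_pos hgx p
  refine (hf.fun_div (hg.rpow_const (Or.inl hgx.ne')) hpow.ne').congr_deriv ?_
  rw [rpow_add_one hgx.ne', rpow_sub_one hgx.ne']
  field_simp

lemma hasDerivAt_cos_const_mul (c t : ℝ) :
    HasDerivAt (fun s ↦ cos (c * s)) (-(c * sin (c * t))) t := by
  simpa [mul_comm] using ((hasDerivAt_id t).const_mul c).cos

lemma hasDerivAt_cos_div_cos_rpow (α β p : ℝ) {t : ℝ} (hcos : 0 < cos (β * t)) :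
    HasDerivAt (fun s ↦ cos (α * s) / cos (β * s) ^ p)
      ((p * β * (cos (α * t) * sin (β * t)) - α * (sin (α * t) * cos (β * t))) /
        cos (β * t) ^ (p + 1)) t := by
  refine (hasDerivAt_div_rpow_const (hasDerivAt_cos_const_mul α t)
    (hasDerivAt_cos_const_mul β t) hcos).congr_deriv ?_
  ring

lemma cos_mul_sin_lt_sin_mul_cos {x y : ℝ} (hyx : y < x) (hxy : x < y + π) :
    cos x * sin y < sin x * cos y := by
  have hsin : 0 < sin (x - y) := sin_pos_of_pos_of_lt_pi (by linarith) (by linarith)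
  rw [sin_sub] at hsin
  linarith

lemma mul_cos_mul_sin_lt_mul_sin_mul_cos {c d x y : ℝ} (hc : 0 ≤ c) (hcd : c ≤ d) (hd : 0 < d)
    (hy : 0 ≤ y) (hy' : y < π / 2) (hyx : y < x) (hx : x < π) :
    c * (cos x * sin y) < d * (sin x * cos y) := by
  have hpos : 0 < sin x * cos y :=
    mul_pos (sin_pos_of_pos_of_lt_pi (by linarith) hx)
      (cos_pos_of_mem_Ioo ⟨by linarith [pi_pos], hy'⟩)
  have hlt : cos x * sin y < sin x * cos y := cos_mul_sin_lt_sin_mul_cos hyx (by linarith)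
  rcases hc.eq_or_lt with rfl | hc
  · simpa only [zero_mul] using mul_pos hd hpos
  · calc c * (cos x * sin y) < c * (sin x * cos y) := mul_lt_mul_of_pos_left hlt hc
      _ ≤ d * (sin x * cos y) := mul_le_mul_of_nonneg_right hcd hpos.le

lemma deriv_cos_div_cos_rpow_neg {α β p t : ℝ} (hp : 0 ≤ p) (hβ : 0 ≤ β) (hβα : β < α)
    (hpβ : p * β ≤ α) (ht : 0 < t) (hβt : β * t < π / 2) (hαt : α * t < π) :
    deriv (fun s ↦ cos (α * s) / cos (β * s) ^ p) t < 0 := by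
  have hβt₀ : 0 ≤ β * t := mul_nonneg hβ ht.le
  have hcos : 0 < cos (β * t) := cos_pos_of_mem_Ioo ⟨by linarith [pi_pos], hβt⟩
  rw [(hasDerivAt_cos_div_cos_rpow α β p hcos).deriv]
  refine div_neg_of_neg_of_pos (sub_neg.2 ?_) (rpow_pos_of_pos hcos _)
  exact mul_cos_mul_sin_lt_mul_sin_mul_cos (mul_nonneg hp hβ) hpβ (hβ.trans_lt hβα) hβt₀ hβt
    (mul_lt_mul_of_pos_right hβα ht) hαt

theorem stmt_14_general {p a : ℝ} (hp : 0 ≤ p) (hpa : p * (π / 2) ≤ a + π / 2)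
    (ha : a ∈ Set.Ioc 0 (π / 2)) {ρ : ℝ → ℝ}
    (hρ : ∀ t, ρ t = cos ((a + π / 2) * t) / cos (π * t / 2) ^ p) :
    ∀ t ∈ Set.Ioo (0 : ℝ) 1, DifferentiableAt ℝ ρ t ∧ deriv ρ t < 0 := by
  rintro t ⟨ht₀, ht₁⟩
  obtain rfl : ρ = fun s ↦ cos ((a + π / 2) * s) / cos (π / 2 * s) ^ p :=
    funext fun s ↦ by rw [hρ, mul_div_right_comm]
  have hβ : 0 < π / 2 := pi_div_two_pos
  have hβt : π / 2 * t < π / 2 := mul_lt_of_lt_one_right hβ ht₁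
  have hαt : (a + π / 2) * t < π :=
    (mul_lt_of_lt_one_right (add_pos ha.1 hβ) ht₁).trans_le (by linarith [ha.2])
  have hneg := deriv_cos_div_cos_rpow_neg hp hβ.le (lt_add_of_pos_left _ ha.1) hpa ht₀ hβt hαt
  exact ⟨differentiableAt_of_deriv_ne_zero hneg.ne, hneg⟩

theorem stmt_14 (n : ℕ) (hn : 1 ≤ n) (a : ℝ) (ha : a ∈ Set.Ioo 0 (π/2))
    (ρ : ℝ → ℝ)
    (hρ : ∀ t, ρ t = cos ((a + π/2) * t) / (cos (π * t / 2)) ^ ((n:ℝ)/((n:ℝ)+1))) :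
    ∀ t ∈ Set.Ioo (0:ℝ) 1, DifferentiableAt ℝ ρ t ∧ deriv ρ t < 0 := by
  have hp : (n : ℝ) / (n + 1) ≤ 1 := div_le_one_of_le₀ (by linarith) (by positivity)
  exact stmt_14_general (by positivity) ((mul_le_of_le_one_left pi_div_two_pos.le hp).trans
    (le_add_of_nonneg_left ha.1.le)) ⟨ha.1, ha.2.le⟩ hρ
end

section
/- Let a_j, a_k be positive reals with a_k ≤ a_j and a_j + a_k ≤ π/2. Consider the function q(t) = cos((a_k + π/2)t) · sin(a_j t) / ( cos((a_j + π/2)t) · sin(a_k t) ), defined for those t ∈ (0,1) with cos((a_j + π/2)t) ≠ 0. Then at every such t the function q is differentiable and q'(t) ≥ 0. -/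
open Real

/-!
Put `a = ak`, `b = aj`, `c = π / 2` and `x = a t`, `y = b t`, `z = c t`. Since `q` is the quotient
of `sin (b t) / cos ((b + c) t)` by `sin (a t) / cos ((a + c) t)`, its logarithmic derivative is
`(L y - L x) / t`, where `L s = s cot s + (s + z) tan (s + z)`. If `cos (x + z)` and `cos (y + z)`
have the same sign, then `q > 0` and `L` is monotone on `[x, y]`. Otherwise `[x + z, y + z]`
contains the pole `π / 2` of `tan`, and the terms in the numerator of `q'` are separately
nonnegative, because `s cot s` is antitone.
-/

lemma hasDerivAt_mul_cot {x : ℝ} (hx : sin x ≠ 0) :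
    HasDerivAt (fun u => u * cot u) ((sin x * cos x - x) / sin x ^ 2) x := by
  have h := (hasDerivAt_id x).mul ((hasDerivAt_cos x).div (hasDerivAt_sin x) hx)
  simp only [cot_eq_cos_div_sin]
  refine h.congr_deriv ?_
  simp only [id_eq, Pi.div_apply]
  field_simp
  linear_combination -x * sin_sq_add_cos_sq x

lemma hasDerivAt_mul_tan {x : ℝ} (hx : cos x ≠ 0) :
    HasDerivAt (fun u => u * tan u) ((x + sin x * cos x) / cos x ^ 2) x := by
  refine ((hasDerivAt_id x).mul (hasDerivAt_tan hx)).congr_deriv ?_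
  simp only [id_eq, tan_eq_sin_div_cos]
  field_simp
  ring

lemma sin_mul_cos_le_self {x : ℝ} (hx : 0 ≤ x) : sin x * cos x ≤ x := by
  have h := sin_le (mul_nonneg zero_le_two hx)
  rw [sin_two_mul] at h
  linarith

lemma antitoneOn_mul_cot : AntitoneOn (fun x => x * cot x) (Set.Ioo 0 π) := by
  have hderiv : ∀ x ∈ Set.Ioo 0 π,
      HasDerivAt (fun u => u * cot u) ((sin x * cos x - x) / sin x ^ 2) x :=
    fun x hx => hasDerivAt_mul_cot (sin_pos_of_mem_Ioo hx).ne'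
  refine antitoneOn_of_deriv_nonpos (convex_Ioo 0 π)
    (fun x hx => (hderiv x hx).continuousAt.continuousWithinAt) ?_ ?_ <;> rw [interior_Ioo]
  · exact fun x hx => (hderiv x hx).differentiableAt.differentiableWithinAt
  · intro x hx
    rw [(hderiv x hx).deriv]
    exact div_nonpos_of_nonpos_of_nonneg (sub_nonpos.2 (sin_mul_cos_le_self hx.1.le))
      (sq_nonneg _)

lemma monotone_add_sin_mul_cos : Monotone fun x : ℝ => x + sin x * cos x := by
  refine monotone_of_hasDerivAt_nonneg (f' := fun x => 2 * cos x ^ 2) (fun x => ?_)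
    fun x => by positivity
  refine ((hasDerivAt_id x).add ((hasDerivAt_sin x).mul (hasDerivAt_cos x))).congr_deriv ?_
  linear_combination -sin_sq_add_cos_sq x

lemma mul_cos_le_sin_mul {x : ℝ} (h0 : 0 ≤ x) (hπ : x ≤ π) :
    x * cos x ≤ sin x * (1 + cos x - cos x ^ 2) := by
  have hsin : 0 ≤ sin x := sin_nonneg_of_nonneg_of_le_pi h0 hπ
  rcases lt_or_ge x (π / 2) with hx | hx
  · have hcos : 0 < cos x := cos_pos_of_mem_Ioo ⟨by linarith [pi_pos], hx⟩
    have htan : x * cos x ≤ sin x := by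
      rw [← le_div_iff₀ hcos, ← tan_eq_sin_div_cos]
      exact le_tan h0 hx
    have hrest : 0 ≤ sin x * (cos x * (1 - cos x)) :=
      mul_nonneg hsin (mul_nonneg hcos.le (sub_nonneg.2 (cos_le_one x)))
    linarith
  · have hcos : cos x ≤ 0 := cos_nonpos_of_pi_div_two_le_of_le hx (by linarith [pi_pos])
    have hrest : 0 ≤ sin x * (1 - cos x ^ 2) :=
      mul_nonneg hsin (sub_nonneg.2 (cos_sq_le_one x))
    calc x * cos x ≤ sin x * cos x := mul_le_mul_of_nonpos_right (sin_le h0) hcos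
      _ ≤ sin x * (1 + cos x - cos x ^ 2) := by linarith

lemma sub_sin_mul_cos_le {x : ℝ} (h0 : 0 ≤ x) (hx : x ≤ π / 2) :
    x - sin x * cos x ≤ (2 * x + sin (2 * x) * cos (2 * x)) * sin x ^ 2 := by
  have h := mul_cos_le_sin_mul (x := 2 * x) (by linarith) (by linarith)
  have hsin : sin x * cos x = sin (2 * x) / 2 := by rw [sin_two_mul]; ring
  rw [hsin, sin_sq_eq_half_sub]
  linarith

/-- The function `x cot x + (x + z) tan (x + z)`. At `x = a t`, `z = c t` it is `t` times the
logarithmic derivative in `t` of `sin (a t) / cos ((a + c) t)`. -/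
noncomputable def cotTan (z x : ℝ) : ℝ := x * cot x + (x + z) * tan (x + z)

lemma hasDerivAt_cotTan {z x : ℝ} (hs : sin x ≠ 0) (hc : cos (x + z) ≠ 0) :
    HasDerivAt (cotTan z) ((sin x * cos x - x) / sin x ^ 2 +
      (x + z + sin (x + z) * cos (x + z)) / cos (x + z) ^ 2) x :=
  (hasDerivAt_mul_cot hs).add ((hasDerivAt_mul_tan hc).comp_add_const x z)

lemma deriv_cotTan_nonneg {z x : ℝ} (hx : 0 < x) (hxz : x ≤ z) (hπ : x + z ≤ π)
    (hc : cos (x + z) ≠ 0) : 0 ≤ deriv (cotTan z) x := by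
  have hs : 0 < sin x := sin_pos_of_pos_of_lt_pi hx (by linarith)
  have hmono : 2 * x + sin (2 * x) * cos (2 * x) ≤ x + z + sin (x + z) * cos (x + z) :=
    monotone_add_sin_mul_cos (by linarith)
  have hcot : (x - sin x * cos x) / sin x ^ 2 ≤ x + z + sin (x + z) * cos (x + z) := by
    rw [div_le_iff₀ (by positivity)]
    exact (sub_sin_mul_cos_le hx.le (by linarith)).trans (by gcongr)
  have htan : x + z + sin (x + z) * cos (x + z) ≤
      (x + z + sin (x + z) * cos (x + z)) / cos (x + z) ^ 2 := by
    refine le_div_self ?_ (by positivity) (cos_sq_le_one _)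
    exact (div_nonneg (sub_nonneg.2 (sin_mul_cos_le_self hx.le)) (sq_nonneg _)).trans hcot
  rw [(hasDerivAt_cotTan hs.ne' hc).deriv, ← neg_sub x, neg_div]
  linarith

lemma monotoneOn_cotTan {x y z : ℝ} (hx : 0 < x) (hyz : y ≤ z) (hπ : y + z ≤ π)
    (hc : ∀ s ∈ Set.Icc x y, cos (s + z) ≠ 0) : MonotoneOn (cotTan z) (Set.Icc x y) := by
  have hdiff : ∀ s ∈ Set.Icc x y, DifferentiableAt ℝ (cotTan z) s := fun s hs =>
    (hasDerivAt_cotTan (sin_pos_of_pos_of_lt_pi (by linarith [hs.1])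
      (by linarith [hs.1, hs.2])).ne' (hc s hs)).differentiableAt
  refine monotoneOn_of_deriv_nonneg (convex_Icc x y)
    (fun s hs => (hdiff s hs).continuousAt.continuousWithinAt)
    (fun s hs => (hdiff s (interior_subset hs)).differentiableWithinAt) fun s hs => ?_
  obtain ⟨hxs, hsy⟩ := interior_subset hs
  exact deriv_cotTan_nonneg (by linarith) (by linarith) (by linarith) (hc s ⟨hxs, hsy⟩)

section CotTanGap

variable {x y z : ℝ}

/-- The product `cos (x + z) * cos (y + z) * (cotTan z y - cotTan z x)` with the poles of `tan`
cancelled, so that it keeps its meaning where one of the cosines vanishes. -/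
noncomputable def cotTanGap (z x y : ℝ) : ℝ :=
  cos (x + z) * cos (y + z) * (y * cot y - x * cot x) +
    ((y + z) * sin (y + z) * cos (x + z) - (x + z) * sin (x + z) * cos (y + z))

lemma cotTanGap_eq (hx : cos (x + z) ≠ 0) (hy : cos (y + z) ≠ 0) :
    cotTanGap z x y = cos (x + z) * cos (y + z) * (cotTan z y - cotTan z x) := by
  simp only [cotTanGap, cotTan, tan_eq_sin_div_cos]
  field_simp
  ring

lemma sin_mul_sin_mul_cotTanGap (hx : sin x ≠ 0) (hy : sin y ≠ 0) :
    sin x * sin y * cotTanGap z x y =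
      (y * cos (x + z) * cos y - (x + z) * sin (x + z) * sin y) * (cos (y + z) * sin x) -
        cos (x + z) * sin y * (x * cos (y + z) * cos x - (y + z) * sin (y + z) * sin x) := by
  simp only [cotTanGap, cot_eq_cos_div_sin]
  field_simp
  ring

lemma cotTanGap_nonneg_of_cos_ne_zero (hx : 0 < x) (hxy : x ≤ y) (hyz : y ≤ z) (hπ : y + z ≤ π)
    (hc : ∀ s ∈ Set.Icc x y, cos (s + z) ≠ 0) (hcos : 0 ≤ cos (x + z) * cos (y + z)) :
    0 ≤ cotTanGap z x y := by
  have hxmem : x ∈ Set.Icc x y := ⟨le_rfl, hxy⟩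
  have hymem : y ∈ Set.Icc x y := ⟨hxy, le_rfl⟩
  rw [cotTanGap_eq (hc x hxmem) (hc y hymem)]
  exact mul_nonneg hcos (sub_nonneg.2 (monotoneOn_cotTan hx hyz hπ hc hxmem hymem hxy))

lemma cotTanGap_nonneg_of_cos_nonneg_of_cos_nonpos (hx : 0 < x) (hxy : x ≤ y) (hz : 0 ≤ z)
    (hyπ : y < π) (hπ : y + z ≤ π) (hcx : 0 ≤ cos (x + z)) (hcy : cos (y + z) ≤ 0) :
    0 ≤ cotTanGap z x y := by
  have hcot : y * cot y ≤ x * cot x :=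
    antitoneOn_mul_cot ⟨hx, by linarith⟩ ⟨by linarith, hyπ⟩ hxy
  have hsx : 0 ≤ sin (x + z) := sin_nonneg_of_nonneg_of_le_pi (by linarith) (by linarith)
  have hsy : 0 ≤ sin (y + z) := sin_nonneg_of_nonneg_of_le_pi (by linarith) hπ
  refine add_nonneg ?_ (sub_nonneg_of_le (le_trans (b := 0) ?_ ?_))
  · exact mul_nonneg_of_nonpos_of_nonpos (mul_nonpos_of_nonneg_of_nonpos hcx hcy)
      (sub_nonpos.2 hcot)
  · exact mul_nonpos_of_nonneg_of_nonpos (mul_nonneg (by linarith) hsx) hcy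
  · exact mul_nonneg (mul_nonneg (by linarith) hsy) hcx

lemma cotTanGap_nonneg (hx : 0 < x) (hxy : x ≤ y) (hyz : y ≤ z) (hπ : y + z ≤ π) :
    0 ≤ cotTanGap z x y := by
  rcases lt_or_ge (y + z) (π / 2) with hy | hy
  · have hc : ∀ s ∈ Set.Icc x y, 0 < cos (s + z) := fun s hs =>
      cos_pos_of_mem_Ioo ⟨by linarith [hs.1, pi_pos], by linarith [hs.2]⟩
    exact cotTanGap_nonneg_of_cos_ne_zero hx hxy hyz hπ (fun s hs => (hc s hs).ne')
      (mul_pos (hc x ⟨le_rfl, hxy⟩) (hc y ⟨hxy, le_rfl⟩)).le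
  rcases lt_or_ge (π / 2) (x + z) with hx' | hx'
  · have hc : ∀ s ∈ Set.Icc x y, cos (s + z) < 0 := fun s hs =>
      cos_neg_of_pi_div_two_lt_of_lt (by linarith [hs.1]) (by linarith [hs.2, pi_pos])
    exact cotTanGap_nonneg_of_cos_ne_zero hx hxy hyz hπ (fun s hs => (hc s hs).ne)
      (mul_pos_of_neg_of_neg (hc x ⟨le_rfl, hxy⟩) (hc y ⟨hxy, le_rfl⟩)).le
  · exact cotTanGap_nonneg_of_cos_nonneg_of_cos_nonpos hx hxy (by linarith) (by linarith) hπ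
      (cos_nonneg_of_neg_pi_div_two_le_of_le (by linarith [pi_pos]) hx')
      (cos_nonpos_of_pi_div_two_le_of_le hy (by linarith))

end CotTanGap

lemma hasDerivAt_cos_mul_sin (p r t : ℝ) :
    HasDerivAt (fun u => cos (p * u) * sin (r * u))
      (r * cos (p * t) * cos (r * t) - p * sin (p * t) * sin (r * t)) t := by
  have hp := ((hasDerivAt_id t).const_mul p).cos
  have hr := ((hasDerivAt_id t).const_mul r).sin
  refine (hp.mul hr).congr_deriv ?_
  simp only [id_eq]
  ring

theorem stmt_15_general {a b c t : ℝ} (ha : 0 < a) (hab : a ≤ b) (hbc : b ≤ c) (q : ℝ → ℝ)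
    (hq : ∀ u, q u = cos ((a + c) * u) * sin (b * u) / (cos ((b + c) * u) * sin (a * u)))
    (ht : 0 < t) (hπ : (b + c) * t ≤ π) (hc : cos ((b + c) * t) ≠ 0) :
    DifferentiableAt ℝ q t ∧ 0 ≤ deriv q t := by
  have hx : 0 < a * t := mul_pos ha ht
  have hxy : a * t ≤ b * t := by gcongr
  have hyz : b * t ≤ c * t := by gcongr
  have hyz_pi : b * t + c * t ≤ π := by rwa [← add_mul]
  have hsx : 0 < sin (a * t) := sin_pos_of_pos_of_lt_pi hx (by linarith)
  have hsy : 0 < sin (b * t) := sin_pos_of_pos_of_lt_pi (by linarith) (by linarith)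
  have hderiv := ((hasDerivAt_cos_mul_sin (a + c) b t).div (hasDerivAt_cos_mul_sin (b + c) a t)
    (mul_ne_zero hc hsx.ne')).congr_of_eventuallyEq (.of_forall hq)
  refine ⟨hderiv.differentiableAt, ?_⟩
  rw [hderiv.deriv]
  have hgap := mul_nonneg (mul_pos hsx hsy).le (cotTanGap_nonneg hx hxy hyz hyz_pi)
  rw [sin_mul_sin_mul_cotTanGap hsx.ne' hsy.ne'] at hgap
  simp only [← add_mul] at hgap
  refine div_nonneg (nonneg_of_mul_nonneg_right (hgap.trans_eq ?_) ht) (sq_nonneg _)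
  ring

theorem stmt_15 (aj ak : ℝ) (hk : 0 < ak) (hkj : ak ≤ aj) (hsum : aj + ak ≤ π/2)
    (q : ℝ → ℝ)
    (hq : ∀ t, q t = cos ((ak + π/2) * t) * sin (aj * t) /
        (cos ((aj + π/2) * t) * sin (ak * t))) :
    ∀ t ∈ Set.Ioo (0:ℝ) 1, cos ((aj + π/2) * t) ≠ 0 →
      DifferentiableAt ℝ q t ∧ 0 ≤ deriv q t := fun t ht =>
  stmt_15_general hk hkj (by linarith) q hq ht.1
    ((mul_le_of_le_one_right (by linarith) ht.2.le).trans (by linarith))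
end

section
/- Let n = 1, so F(y_1,y_2) = (cos(y_1+y_2)·sin y_1·sin y_2)^{1/2} on Ω = {y_1 > 0, y_2 > 0, y_1 + y_2 < π/2}. Fix y_2 ∈ (0, π/2). Then the function y_1 ↦ ∂F/∂y_1(y_1, y_2), i.e. y_1 ↦ cos(2y_1 + y_2) · sin y_2 / ( 2 · (cos(y_1+y_2) · sin y_1 · sin y_2)^{1/2} ), is a strictly decreasing continuous bijection from the interval (0, (π/2 − y_2)/2) onto (0, +∞); in particular it tends to +∞ as y_1 → 0⁺ and to 0 as y_1 → ((π/2 − y_2)/2)⁻. -/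
open Real Filter Topology

/-!
Let `P(x) = cos (x + y) sin x sin y`, so that `F = √P` and `∂F/∂y₁ = (P' / 2) / √P` with
`P'(x) = cos (2 x + y) sin y`. On `[0, b]`, `b = (π/2 - y)/2`, the numerator decreases strictly to
`0` at `b`, and the denominator increases strictly from `0` at `0`, because
`2 P(x) = (sin (2 x + y) - sin y) sin y`. Any continuous quotient of this kind is a decreasing
bijection from `(0, b)` onto `(0, ∞)`.
-/

theorem mapsTo_Ioo_Ioi_of_strictAntiOn {α β : Type*} [LinearOrder α] [DenselyOrdered α]
    [TopologicalSpace α] [OrderTopology α] [Preorder β] [TopologicalSpace β]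
    [ClosedIicTopology β] {f : α → β} {a b : α} {c : β} (hf : StrictAntiOn f (Set.Ioo a b))
    (hb : Tendsto f (𝓝[<] b) (𝓝 c)) : Set.MapsTo f (Set.Ioo a b) (Set.Ioi c) := by
  intro x hx
  obtain ⟨z, hxz, hzb⟩ := exists_between hx.2
  have hz : z ∈ Set.Ioo a b := ⟨hx.1.trans hxz, hzb⟩
  have : (𝓝[<] b).NeBot := nhdsLT_neBot_of_exists_lt ⟨z, hzb⟩
  have hcz : c ≤ f z := le_of_tendsto hb <| by
    filter_upwards [Ioo_mem_nhdsLT hzb] with w hw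
    exact (hf hz ⟨hz.1.trans hw.1, hw.2⟩ hw.1).le
  exact hcz.trans_lt (hf hx hz hxz)

section BijOn

variable {α β : Type*} [ConditionallyCompleteLinearOrder α] [DenselyOrdered α]
  [TopologicalSpace α] [OrderTopology α] [LinearOrder β] [TopologicalSpace β]
  [OrderClosedTopology β] {f : α → β} {a b : α} {c : β}

theorem surjOn_Ioo_Ioi_of_tendsto (hab : a < b) (hf : ContinuousOn f (Set.Ioo a b))
    (ha : Tendsto f (𝓝[>] a) atTop) (hb : Tendsto f (𝓝[<] b) (𝓝 c)) :
    Set.SurjOn f (Set.Ioo a b) (Set.Ioi c) := by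
  have : (𝓝[>] a).NeBot := nhdsGT_neBot_of_exists_gt ⟨b, hab⟩
  have : (𝓝[<] b).NeBot := nhdsLT_neBot_of_exists_lt ⟨a, hab⟩
  exact isPreconnected_Ioo.intermediate_value_Ioi (le_principal_iff.2 (Ioo_mem_nhdsLT hab))
    (le_principal_iff.2 (Ioo_mem_nhdsGT hab)) hf hb ha

theorem bijOn_Ioo_Ioi_of_strictAntiOn (hab : a < b) (hf : StrictAntiOn f (Set.Ioo a b))
    (hfc : ContinuousOn f (Set.Ioo a b)) (ha : Tendsto f (𝓝[>] a) atTop)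
    (hb : Tendsto f (𝓝[<] b) (𝓝 c)) : Set.BijOn f (Set.Ioo a b) (Set.Ioi c) :=
  ⟨mapsTo_Ioo_Ioi_of_strictAntiOn hf hb, hf.injOn, surjOn_Ioo_Ioi_of_tendsto hab hfc ha hb⟩

end BijOn

section Sign

variable {α β : Type*} [Preorder α] [Zero β] [Preorder β] {N D : α → β} {a b : α}

theorem pos_of_strictMonoOn_Icc (hD : StrictMonoOn D (Set.Icc a b)) (hDa : D a = 0) {x : α}
    (hx : x ∈ Set.Ioc a b) : 0 < D x :=
  hDa ▸ hD ⟨le_rfl, hx.1.le.trans hx.2⟩ ⟨hx.1.le, hx.2⟩ hx.1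

theorem pos_of_strictAntiOn_Icc (hN : StrictAntiOn N (Set.Icc a b)) (hNb : N b = 0) {x : α}
    (hx : x ∈ Set.Ico a b) : 0 < N x :=
  hNb ▸ hN ⟨hx.1, hx.2.le⟩ ⟨hx.1.trans hx.2.le, le_rfl⟩ hx.2

end Sign

section Quotient

variable {α 𝕜 : Type*} [LinearOrder α] [Field 𝕜] [LinearOrder 𝕜] {N D : α → 𝕜} {a b : α}

theorem strictAntiOn_Ioc_div [IsStrictOrderedRing 𝕜] (hN : StrictAntiOn N (Set.Icc a b))
    (hNb : N b = 0) (hD : StrictMonoOn D (Set.Icc a b)) (hDa : D a = 0) :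
    StrictAntiOn (fun x => N x / D x) (Set.Ioc a b) := by
  intro x hx z hz hxz
  have hx' := Set.Ioc_subset_Icc_self hx
  have hz' := Set.Ioc_subset_Icc_self hz
  have hNx : 0 < N x := pos_of_strictAntiOn_Icc hN hNb ⟨hx.1.le, hxz.trans_le hz.2⟩
  exact div_lt_div₀ (hN hx' hz' hxz) (hD hx' hz' hxz).le hNx.le (pos_of_strictMonoOn_Icc hD hDa hx)

variable [TopologicalSpace α] [TopologicalSpace 𝕜]

theorem continuousOn_Ioc_div [IsTopologicalDivisionRing 𝕜] (hNc : ContinuousOn N (Set.Icc a b))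
    (hDc : ContinuousOn D (Set.Icc a b)) (hD : StrictMonoOn D (Set.Icc a b)) (hDa : D a = 0) :
    ContinuousOn (fun x => N x / D x) (Set.Ioc a b) :=
  (hNc.mono Set.Ioc_subset_Icc_self).div (hDc.mono Set.Ioc_subset_Icc_self)
    fun _ hx => (pos_of_strictMonoOn_Icc hD hDa hx).ne'

variable [OrderClosedTopology α]

theorem tendsto_div_nhdsLT_zero [IsTopologicalDivisionRing 𝕜] (hab : a < b)
    (hNc : ContinuousOn N (Set.Icc a b)) (hNb : N b = 0) (hDc : ContinuousOn D (Set.Icc a b))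
    (hD : StrictMonoOn D (Set.Icc a b)) (hDa : D a = 0) :
    Tendsto (fun x => N x / D x) (𝓝[<] b) (𝓝 0) := by
  have hcont := continuousOn_Ioc_div hNc hDc hD hDa b ⟨hab, le_rfl⟩
  have hlim := ((continuousWithinAt_Ioc_iff_Iic hab).1 hcont).mono Set.Iio_subset_Iic_self
  simpa only [hNb, zero_div] using hlim.tendsto

theorem tendsto_div_nhdsGT_atTop [IsStrictOrderedRing 𝕜] [OrderTopology 𝕜] (hab : a < b)
    (hNc : ContinuousOn N (Set.Icc a b)) (hNa : 0 < N a) (hDc : ContinuousOn D (Set.Icc a b))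
    (hD : StrictMonoOn D (Set.Icc a b)) (hDa : D a = 0) :
    Tendsto (fun x => N x / D x) (𝓝[>] a) atTop := by
  have ha : a ∈ Set.Icc a b := ⟨le_rfl, hab.le⟩
  have tendsto_left {f : α → 𝕜} (hf : ContinuousOn f (Set.Icc a b)) :
      Tendsto f (𝓝[>] a) (𝓝 (f a)) :=
    ((continuousWithinAt_Icc_iff_Ici hab).1 (hf a ha)).mono Set.Ioi_subset_Ici_self
  have hDpos : ∀ᶠ x in 𝓝[>] a, D x ∈ Set.Ioi 0 := by
    filter_upwards [Ioc_mem_nhdsGT hab] with x hx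
    exact pos_of_strictMonoOn_Icc hD hDa hx
  have hD0 : Tendsto D (𝓝[>] a) (𝓝[>] 0) :=
    tendsto_nhdsWithin_iff.2 ⟨hDa ▸ tendsto_left hDc, hDpos⟩
  simpa only [div_eq_mul_inv, Pi.inv_apply] using
    (tendsto_left hNc).pos_mul_atTop hNa hD0.inv_tendsto_nhdsGT_zero

end Quotient

theorem strictAntiOn_cos_two_mul_add (y : ℝ) :
    StrictAntiOn (fun x => cos (2 * x + y)) (Set.Icc (-y / 2) ((π - y) / 2)) := by
  intro x hx z hz hxz
  exact cos_lt_cos_of_nonneg_of_le_pi (by linarith [hx.1]) (by linarith [hz.2]) (by linarith)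

theorem cos_add_mul_sin (x y : ℝ) :
    cos (x + y) * sin x = (sin (2 * x + y) - sin y) / 2 := by
  have h := two_mul_sin_mul_cos x (x + y)
  rw [sub_add_cancel_left, sin_neg, ← add_assoc, ← two_mul] at h
  linarith

theorem strictMonoOn_cos_add_mul_sin (y : ℝ) :
    StrictMonoOn (fun x => cos (x + y) * sin x)
      (Set.Icc (-(π / 2 + y) / 2) ((π / 2 - y) / 2)) := by
  intro x hx z hz hxz
  have hsin : sin (2 * x + y) < sin (2 * z + y) :=
    sin_lt_sin_of_lt_of_le_pi_div_two (by linarith [hx.1]) (by linarith [hz.2]) (by linarith)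
  simp only [cos_add_mul_sin]
  linarith

theorem strictMonoOn_rpow_cos_add_mul_sin_mul {y k p : ℝ} (hy : -(π / 2) ≤ y) (hk : 0 < k)
    (hp : 0 < p) :
    StrictMonoOn (fun x => (cos (x + y) * sin x * k) ^ p) (Set.Icc 0 ((π / 2 - y) / 2)) := by
  have hmono : StrictMonoOn (fun x => cos (x + y) * sin x) (Set.Icc 0 ((π / 2 - y) / 2)) :=
    (strictMonoOn_cos_add_mul_sin y).mono (Set.Icc_subset_Icc_left (by linarith))
  intro x hx z hz hxz
  have hnonneg : 0 ≤ cos (x + y) * sin x := by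
    simpa only [sin_zero, mul_zero] using
      hmono.monotoneOn ⟨le_rfl, hx.1.trans hx.2⟩ hx hx.1
  exact rpow_lt_rpow (mul_nonneg hnonneg hk.le) (mul_lt_mul_of_pos_right (hmono hx hz hxz) hk) hp

theorem stmt_17 (y₂ : ℝ) (hy₂ : y₂ ∈ Set.Ioo 0 (π/2))
    (g : ℝ → ℝ)
    (hg : ∀ y₁, g y₁ = cos (2 * y₁ + y₂) * sin y₂ /
        (2 * (cos (y₁ + y₂) * sin y₁ * sin y₂) ^ ((1:ℝ)/2))) :
    StrictAntiOn g (Set.Ioo 0 ((π/2 - y₂)/2)) ∧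
    ContinuousOn g (Set.Ioo 0 ((π/2 - y₂)/2)) ∧
    Set.BijOn g (Set.Ioo 0 ((π/2 - y₂)/2)) (Set.Ioi 0) ∧
    Tendsto g (𝓝[>] 0) atTop ∧
    Tendsto g (𝓝[<] ((π/2 - y₂)/2)) (𝓝 0) := by
  obtain ⟨hy₂_pos, hy₂_lt⟩ := hy₂
  have hsin : 0 < sin y₂ := sin_pos_of_pos_of_lt_pi hy₂_pos (by linarith)
  set b := (π/2 - y₂)/2 with hb_def
  have hb : 0 < b := by linarith
  let N x := cos (2 * x + y₂) * (sin y₂ / 2)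
  let F x := (cos (x + y₂) * sin x * sin y₂) ^ ((1:ℝ)/2)
  obtain rfl : g = fun x => N x / F x := by ext x; rw [hg]; ring
  have hcos := (strictAntiOn_cos_two_mul_add y₂).mono
    (Set.Icc_subset_Icc (by linarith) (by linarith) : Set.Icc 0 b ⊆ _)
  have hN : StrictAntiOn N (Set.Icc 0 b) := fun _ hx _ hz hxz =>
    mul_lt_mul_of_pos_right (hcos hx hz hxz) (half_pos hsin)
  have hF : StrictMonoOn F (Set.Icc 0 b) :=
    strictMonoOn_rpow_cos_add_mul_sin_mul (by linarith) hsin one_half_pos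
  have hNb : N b = 0 := by simp [N, hb_def, mul_div_cancel₀]
  have hF0 : F 0 = 0 := by simp [F]
  have hNc : ContinuousOn N (Set.Icc 0 b) := by fun_prop
  have hFc : ContinuousOn F (Set.Icc 0 b) :=
    (Continuous.rpow_const (by fun_prop) fun _ => .inr one_half_pos.le).continuousOn
  have hanti := (strictAntiOn_Ioc_div hN hNb hF hF0).mono Set.Ioo_subset_Ioc_self
  have hcont := (continuousOn_Ioc_div hNc hFc hF hF0).mono Set.Ioo_subset_Ioc_self
  have hN0 : 0 < N 0 := pos_of_strictAntiOn_Icc hN hNb ⟨le_rfl, hb⟩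
  have htop := tendsto_div_nhdsGT_atTop hb hNc hN0 hFc hF hF0
  have hzero := tendsto_div_nhdsLT_zero hb hNc hNb hFc hF hF0
  exact ⟨hanti, hcont, bijOn_Ioo_Ioi_of_strictAntiOn hb hanti hcont htop hzero, htop, hzero⟩
end
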